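/- Let Γ be a group, R a Γ-graded ring, and 𝒫 a gr-prime matrix ideal of R. Then there exist a Γ-graded division ring K and a homomorphism of Γ-graded rings φ : R → K such that (K, φ) is a Γ-graded epic R-division ring and 𝒫 = {A ∈ 𝔐(R) : A^φ is not invertible over K}. -/

import Mathlib

open Matrix

universe u v w

section GradedDefs

variable {Γ : Type u} [Group Γ] {R : Type v} [Ring R]

/-- `A` is a homogeneous matrix of distribution `(α, β)`:
its `(i,j)` entry lies in `𝒜 (α i * (β j)⁻¹)`. -/
def IsHomog (𝒜 : Γ → AddSubgroup R) {m n : ℕ}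
    (A : Matrix (Fin m) (Fin n) R) (α : Fin m → Γ) (β : Fin n → Γ) : Prop :=
  ∀ i j, A i j ∈ 𝒜 (α i * (β j)⁻¹)

/-- `A` is a homogeneous matrix for some distribution. -/
def IsHomogSq (𝒜 : Γ → AddSubgroup R) {m n : ℕ}
    (A : Matrix (Fin m) (Fin n) R) : Prop :=
  ∃ (α : Fin m → Γ) (β : Fin n → Γ), IsHomog 𝒜 A α β

end GradedDefs

/-- Square matrices over `R` of arbitrary finite size. -/
abbrev SqMat (R : Type v) : Type v := Σ n : ℕ, Matrix (Fin n) (Fin n) R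

section GradedDefs

variable {Γ : Type u} [Group Γ] {R : Type v} [Ring R]

/-- Diagonal sum `A ⊕ B` of two (rectangular) matrices. -/
def diagSum {m n m' n' : ℕ} (A : Matrix (Fin m) (Fin n) R)
    (B : Matrix (Fin m') (Fin n') R) : Matrix (Fin (m + m')) (Fin (n + n')) R :=
  Matrix.reindex finSumFinEquiv finSumFinEquiv (Matrix.fromBlocks A 0 0 B)

/-- Block lower triangular matrix `[[A, 0], [C, B]]`. -/
def lowerBlockSum {n m : ℕ} (A : Matrix (Fin n) (Fin n) R) (B : Matrix (Fin m) (Fin m) R)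
    (C : Matrix (Fin m) (Fin n) R) : Matrix (Fin (n + m)) (Fin (n + m)) R :=
  Matrix.reindex finSumFinEquiv finSumFinEquiv (Matrix.fromBlocks A 0 C B)

/-- Block upper triangular matrix `[[A, C], [0, B]]` with rectangular blocks. -/
def upperBlockSum {m n m' n' : ℕ} (A : Matrix (Fin m) (Fin n) R)
    (B : Matrix (Fin m') (Fin n') R) (C : Matrix (Fin m) (Fin n') R) :
    Matrix (Fin (m + m')) (Fin (n + n')) R :=
  Matrix.reindex finSumFinEquiv finSumFinEquiv (Matrix.fromBlocks A C 0 B)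

/-- `C` is the determinantal sum of `A` and `B` with respect to some column or row:
`A` and `B` agree away from that column (row) and the distinguished column (row) of `C`
is the sum of the corresponding columns (rows) of `A` and `B`. -/
def IsDetSum {n : ℕ} (A B C : Matrix (Fin n) (Fin n) R) : Prop :=
  (∃ c : Fin n, (∀ i j, j ≠ c → A i j = B i j) ∧
      ∀ i j, C i j = if j = c then A i j + B i j else A i j) ∨
  (∃ r : Fin n, (∀ i j, i ≠ r → A i j = B i j) ∧
      ∀ i j, C i j = if i = r then A i j + B i j else A i j)

/-- `C` is the determinantal sum of the homogeneous matrices `A` and `B`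
(which have a common distribution). -/
def GrDetSum (𝒜 : Γ → AddSubgroup R) {n : ℕ} (A B C : Matrix (Fin n) (Fin n) R) : Prop :=
  (∃ α β : Fin n → Γ, IsHomog 𝒜 A α β ∧ IsHomog 𝒜 B α β) ∧ IsDetSum A B C

/-- A square homogeneous matrix `A` is gr-full if whenever `A = P * Q` with `P`
homogeneous of distribution `(α, lam)` and `Q` homogeneous of distribution `(lam, β)`
where `lam` has length `r`, then `r ≥ n`. -/
def IsGrFull (𝒜 : Γ → AddSubgroup R) {n : ℕ} (A : Matrix (Fin n) (Fin n) R) : Prop :=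
  ∀ (r : ℕ) (P : Matrix (Fin n) (Fin r) R) (Q : Matrix (Fin r) (Fin n) R)
    (α : Fin n → Γ) (lam : Fin r → Γ) (β : Fin n → Γ),
    IsHomog 𝒜 P α lam → IsHomog 𝒜 Q lam β → A = P * Q → n ≤ r

/-- gr-prime matrix ideal: a set of square homogeneous matrices satisfying (PM1)–(PM6). -/
structure IsGrPrimeMatrixIdeal (𝒜 : Γ → AddSubgroup R) (P : Set (SqMat R)) : Prop where
  subset_homog : ∀ p ∈ P, IsHomogSq 𝒜 p.2
  pm1 : ∀ {n : ℕ} (A : Matrix (Fin n) (Fin n) R),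
    IsHomogSq 𝒜 A → ¬ IsGrFull 𝒜 A → (⟨n, A⟩ : SqMat R) ∈ P
  pm2 : ∀ {n : ℕ} (A B C : Matrix (Fin n) (Fin n) R),
    (⟨n, A⟩ : SqMat R) ∈ P → (⟨n, B⟩ : SqMat R) ∈ P → GrDetSum 𝒜 A B C →
    (⟨n, C⟩ : SqMat R) ∈ P
  pm3 : ∀ {m n : ℕ} (A : Matrix (Fin m) (Fin m) R) (B : Matrix (Fin n) (Fin n) R),
    (⟨m, A⟩ : SqMat R) ∈ P → IsHomogSq 𝒜 B → (⟨m + n, diagSum A B⟩ : SqMat R) ∈ P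
  pm4 : ∀ {m n : ℕ} (A : Matrix (Fin m) (Fin m) R) (B : Matrix (Fin n) (Fin n) R),
    IsHomogSq 𝒜 A → IsHomogSq 𝒜 B → (⟨m + n, diagSum A B⟩ : SqMat R) ∈ P →
    (⟨m, A⟩ : SqMat R) ∈ P ∨ (⟨n, B⟩ : SqMat R) ∈ P
  pm5 : (⟨1, (1 : Matrix (Fin 1) (Fin 1) R)⟩ : SqMat R) ∉ P
  pm6 : ∀ {n : ℕ} (A : Matrix (Fin n) (Fin n) R) (e f : Equiv.Perm (Fin n)),
    (⟨n, A⟩ : SqMat R) ∈ P → (⟨n, A.submatrix ⇑e ⇑f⟩ : SqMat R) ∈ P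

/-- gr-matrix ideal: a set of square homogeneous matrices satisfying (I1)–(I5). -/
structure IsGrMatrixIdeal (𝒜 : Γ → AddSubgroup R) (I : Set (SqMat R)) : Prop where
  subset_homog : ∀ p ∈ I, IsHomogSq 𝒜 p.2
  i1 : ∀ {n : ℕ} (A : Matrix (Fin n) (Fin n) R),
    IsHomogSq 𝒜 A → ¬ IsGrFull 𝒜 A → (⟨n, A⟩ : SqMat R) ∈ I
  i2 : ∀ {n : ℕ} (A B C : Matrix (Fin n) (Fin n) R),
    (⟨n, A⟩ : SqMat R) ∈ I → (⟨n, B⟩ : SqMat R) ∈ I → GrDetSum 𝒜 A B C →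
    (⟨n, C⟩ : SqMat R) ∈ I
  i3 : ∀ {m n : ℕ} (A : Matrix (Fin m) (Fin m) R) (B : Matrix (Fin n) (Fin n) R),
    (⟨m, A⟩ : SqMat R) ∈ I → IsHomogSq 𝒜 B → (⟨m + n, diagSum A B⟩ : SqMat R) ∈ I
  i4 : ∀ {n : ℕ} (A : Matrix (Fin n) (Fin n) R) (e f : Equiv.Perm (Fin n)),
    (⟨n, A⟩ : SqMat R) ∈ I → (⟨n, A.submatrix ⇑e ⇑f⟩ : SqMat R) ∈ I
  i5 : ∀ {n : ℕ} (A : Matrix (Fin n) (Fin n) R),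
    (⟨n + 1, diagSum A (1 : Matrix (Fin 1) (Fin 1) R)⟩ : SqMat R) ∈ I →
    (⟨n, A⟩ : SqMat R) ∈ I

/-- The diagonal sum of `r` copies of `A`. -/
def diagIter {n : ℕ} (A : Matrix (Fin n) (Fin n) R) :
    (r : ℕ) → Matrix (Fin (n * r)) (Fin (n * r)) R
  | 0 => 0
  | r + 1 => diagSum (diagIter A r) A

/-- Iterated determinantal sums (with arbitrary bracketing) of elements of `W`. -/
inductive IsDetSumOf (𝒜 : Γ → AddSubgroup R) (W : Set (SqMat R)) : SqMat R → Prop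
  | base (p : SqMat R) (hp : p ∈ W) : IsDetSumOf 𝒜 W p
  | step {n : ℕ} (A B C : Matrix (Fin n) (Fin n) R)
      (hA : IsDetSumOf 𝒜 W ⟨n, A⟩) (hB : IsDetSumOf 𝒜 W ⟨n, B⟩)
      (h : GrDetSum 𝒜 A B C) : IsDetSumOf 𝒜 W ⟨n, C⟩

/-- The homogeneous rational closure of degree `γ`: entries `(j,i)` of inverses of matrices
`A^f` with `A ∈ Sig` homogeneous of distribution `(α, β)` and `β j * (α i)⁻¹ = γ`. -/
def RatCl (𝒜 : Γ → AddSubgroup R) {S : Type w} [Ring S] (Sig : Set (SqMat R)) (f : R →+* S)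
    (γ : Γ) : Set S :=
  {x | ∃ (n : ℕ) (A : Matrix (Fin n) (Fin n) R) (α β : Fin n → Γ) (i j : Fin n)
        (B : Matrix (Fin n) (Fin n) S),
      (⟨n, A⟩ : SqMat R) ∈ Sig ∧ IsHomog 𝒜 A α β ∧ β j * (α i)⁻¹ = γ ∧
      (A.map ⇑f) * B = 1 ∧ B * (A.map ⇑f) = 1 ∧ B j i = x}

/-- gr-lower semimultiplicative set of square homogeneous matrices. -/
def IsGrLowerSemimult (𝒜 : Γ → AddSubgroup R) (Sig : Set (SqMat R)) : Prop :=
  ((⟨1, (1 : Matrix (Fin 1) (Fin 1) R)⟩ : SqMat R) ∈ Sig) ∧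
  ∀ {n m : ℕ} (A : Matrix (Fin n) (Fin n) R) (B : Matrix (Fin m) (Fin m) R)
    (α β : Fin n → Γ) (α' β' : Fin m → Γ) (C : Matrix (Fin m) (Fin n) R),
    (⟨n, A⟩ : SqMat R) ∈ Sig → (⟨m, B⟩ : SqMat R) ∈ Sig →
    IsHomog 𝒜 A α β → IsHomog 𝒜 B α' β' → IsHomog 𝒜 C α' β →
    (⟨n + m, lowerBlockSum A B C⟩ : SqMat R) ∈ Sig

end GradedDefs

/-- A homomorphism of `Γ`-graded rings from `(R, 𝒜)` to a `Γ`-graded division ring. -/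
structure GrDivRingHom (Γ : Type u) [Group Γ] [DecidableEq Γ] (R : Type v) [Ring R]
    (𝒜 : Γ → AddSubgroup R) where
  K : Type (max u v)
  [ringK : Ring K]
  [nontrivialK : Nontrivial K]
  grading : Γ → AddSubgroup K
  internal : DirectSum.IsInternal grading
  one_mem : (1 : K) ∈ grading 1
  mul_mem : ∀ {γ δ : Γ} {x y : K}, x ∈ grading γ → y ∈ grading δ → x * y ∈ grading (γ * δ)
  isUnit_of_ne : ∀ {γ : Γ} {x : K}, x ∈ grading γ → x ≠ 0 → IsUnit x
  φ : R →+* K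
  map_mem : ∀ {γ : Γ} {r : R}, r ∈ 𝒜 γ → φ r ∈ grading γ

attribute [instance] GrDivRingHom.ringK GrDivRingHom.nontrivialK

/-!
This is Malcolmson's construction, carried out degree by degree. A homogeneous element of `K` is a
formal fraction `f A⁻¹ x`, where `A` is a homogeneous square matrix outside `P`; it is declared
zero when the bordered matrix `[[A, x], [f, 0]]` lies in `P`, and two fractions are equal when
their difference is zero. If `B V = U A`, `U x = y` and `g V = f`, then `f A⁻¹ x` and `g B⁻¹ y`
vanish together, because row and column operations preserve `P`. Every identity needed for a graded
ring comes from such a pair `(U, V)`; products are well defined because, by (PM4), a product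
vanishes exactly when one of its factors does.

If `A ∉ P`, the matrix with entries `e_j A⁻¹ e_i` is inverse to `A^φ`, and the Schur complement
`φ(d) - f A⁻¹ x` vanishes when `[[A, x], [f, d]]` lies in `P`. A nonzero fraction `f A⁻¹ x` is, up
to sign, the Schur complement of `A` in its bordered matrix, whose image is invertible; so it is
invertible too.

Conversely, if `A^φ` is injective, a maximal nonsingular minor of `A` has to be `A` itself:
otherwise some row and column would border it with a nonzero Schur complement. Let `T` be a subring
of `K` containing `φ(R)` and closed under inverses of nonzero homogeneous elements. Along such a
chain of minors, a vector `v` has entries in `T` as soon as `A^φ v` does; hence every fraction lies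
in `T`, and `T = K`.
-/

lemma isInternal_range_of {I : Type*} [DecidableEq I] (M : I → Type*)
    [∀ i, AddCommGroup (M i)] : DirectSum.IsInternal fun i => (DirectSum.of M i).range := by
  let incl (i : I) : M i →+ (DirectSum.of M i).range := (DirectSum.of M i).rangeRestrict
  have coe_map (x : DirectSum I M) :
      DirectSum.coeAddMonoidHom (fun i => (DirectSum.of M i).range) (DirectSum.map incl x) = x := by
    induction x using DirectSum.induction_on with
    | zero => simp
    | of i x => simp [DirectSum.map_of, incl]
    | add x y hx hy => rw [map_add, map_add, hx, hy]
  refine ⟨?_, fun x => ⟨_, coe_map x⟩⟩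
  have map_surjective : Function.Surjective (DirectSum.map incl) :=
    (DirectSum.map_surjective _).2 fun i => (DirectSum.of M i).rangeRestrict_surjective
  exact (Function.LeftInverse.rightInverse_of_surjective coe_map map_surjective).injective

lemma isUnit_schurComplement {m n K : Type*} [Fintype m] [Fintype n] [DecidableEq m]
    [DecidableEq n] [Ring K] {A N : Matrix m m K} {B : Matrix m n K} {C : Matrix n m K}
    {D : Matrix n n K} (hAN : A * N = 1) (hNA : N * A = 1) (h : IsUnit (fromBlocks A B C D)) :
    IsUnit (D - C * N * B) := by
  obtain ⟨⟨_, X, mul_inv, inv_mul⟩, rfl⟩ := h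
  rw [← fromBlocks_toBlocks X, fromBlocks_multiply, ← fromBlocks_one, fromBlocks_inj]
    at mul_inv inv_mul
  obtain ⟨-, upper_right, -, lower_right⟩ := mul_inv
  obtain ⟨-, -, lower_left, lower_right'⟩ := inv_mul
  have toBlocks₁₂_eq : X.toBlocks₁₂ = -(N * (B * X.toBlocks₂₂)) := by
    rw [← Matrix.mul_neg, ← eq_neg_of_add_eq_zero_left upper_right, ← Matrix.mul_assoc, hNA,
      Matrix.one_mul]
  have toBlocks₂₁_eq : X.toBlocks₂₁ = -(X.toBlocks₂₂ * C * N) := by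
    rw [← Matrix.neg_mul, ← eq_neg_of_add_eq_zero_left lower_left, Matrix.mul_assoc, hAN,
      Matrix.mul_one]
  refine ⟨⟨_, X.toBlocks₂₂, ?_, ?_⟩, rfl⟩
  · rw [← lower_right, toBlocks₁₂_eq, Matrix.sub_mul, Matrix.mul_neg, neg_add_eq_sub]
    simp only [Matrix.mul_assoc]
  · rw [← lower_right', toBlocks₂₁_eq, Matrix.mul_sub, Matrix.neg_mul, neg_add_eq_sub]
    simp only [Matrix.mul_assoc]

lemma exists_ne_submatrix_mulVec {k m n K : Type*} [Fintype k] [Fintype n] [Ring K]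
    [Nontrivial K] {B : Matrix m n K} (inj : Function.Injective B.mulVec) {cols : k → n} {j : n}
    (hj : j ∉ Set.range cols) (z : k → K) : ∃ i, B i j ≠ (B.submatrix id cols *ᵥ z) i := by
  classical
  by_contra! dependent
  have same_image : B *ᵥ Pi.single j 1 = B *ᵥ ∑ k, Pi.single (cols k) (z k) := by
    ext i
    simp only [mulVec_sum, mulVec_single, Finset.sum_apply]
    simpa [mulVec, dotProduct] using dependent i
  have same_entry := congrFun (inj same_image) j
  have other_column (i : k) : cols i ≠ j := fun h => hj ⟨i, h⟩
  simp [(other_column _).symm] at same_entry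

/-- The coordinates of `v` lie in `T` as soon as those of `B v` do. -/
def ReflectsMem {m n K : Type*} [Fintype n] [Ring K] (T : Subring K) (B : Matrix m n K) : Prop :=
  ∀ v : n → K, (∀ i, (B *ᵥ v) i ∈ T) → ∀ j, v j ∈ T

namespace ReflectsMem

variable {m n K : Type*} [Fintype n] [Ring K] {T : Subring K}
  {B : Matrix m n K} {N : Matrix n m K} {x : m → K}

lemma of_submatrix {k l : Type*} [Fintype l] {e : k → m} (f : l ≃ n)
    (h : ReflectsMem T (B.submatrix e f)) : ReflectsMem T B := by
  intro v hv j
  obtain ⟨j, rfl⟩ := f.surjective j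
  refine h (v ∘ f) (fun i => ?_) j
  simpa [submatrix_mulVec_equiv, Function.comp_assoc] using hv (e i)

variable [Fintype m] [DecidableEq m]

lemma mulVec_mem (hB : ReflectsMem T B) (hBN : B * N = 1) (hx : ∀ i, x i ∈ T) (j : n) :
    (N *ᵥ x) j ∈ T :=
  hB _ (by simpa [mulVec_mulVec, hBN] using hx) j

lemma fromBlocks (hB : ReflectsMem T B) (hBN : B * N = 1) (hx : ∀ i, x i ∈ T) {y : n → K}
    (hy : ∀ j, y j ∈ T) {d u : K} (hu : u ∈ T) (hud : u * (d - y ⬝ᵥ (N *ᵥ x)) = 1) :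
    ReflectsMem T (fromBlocks B (replicateCol Unit x) (replicateRow Unit y) (of fun _ _ => d)) := by
  intro v hv
  let w : n → K := v ∘ Sum.inl
  let t : K := v (.inr ())
  let z : n → K := w + MulOpposite.op t • (N *ᵥ x)
  have upper (i : m) : (B *ᵥ w) i + x i * t ∈ T := by
    simpa [mulVec, dotProduct, w, t] using hv (.inl i)
  have lower : y ⬝ᵥ w + d * t ∈ T := by
    simpa [mulVec, dotProduct, w, t] using hv (.inr ())
  have z_mem : ∀ j, z j ∈ T := hB z fun i => by
    simpa [z, mulVec_add, mulVec_smul, mulVec_mulVec, hBN] using upper i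
  have t_mem : t ∈ T := by
    have t_eq : t = u * ((y ⬝ᵥ w + d * t) - y ⬝ᵥ z) := by
      simp only [z, dotProduct_add, dotProduct_smul, add_sub_add_left_eq_sub,
        op_smul_eq_mul, ← sub_mul]
      rw [← mul_assoc, hud, one_mul]
    rw [t_eq]
    exact T.mul_mem hu (T.sub_mem lower (sum_mem fun j _ => T.mul_mem (hy j) (z_mem j)))
  rintro (j | _)
  · simpa [z, w] using T.sub_mem (z_mem j) (T.mul_mem (hB.mulVec_mem hBN hx j) t_mem)
  · exact t_mem

end ReflectsMem

/-- A gr-prime matrix ideal `P` bundled with the `Γ`-graded ring `(R, 𝒜)` it lives in. -/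
structure GrPrimeDatum (Γ : Type u) [Group Γ] [DecidableEq Γ] (R : Type v) [Ring R] where
  𝒜 : Γ → AddSubgroup R
  internal : DirectSum.IsInternal 𝒜
  one_mem : (1 : R) ∈ 𝒜 1
  mul_mem : ∀ {γ δ : Γ} {x y : R}, x ∈ 𝒜 γ → y ∈ 𝒜 δ → x * y ∈ 𝒜 (γ * δ)
  P : Set (SqMat R)
  prime : IsGrPrimeMatrixIdeal 𝒜 P

namespace GrPrimeDatum

variable {Γ : Type u} [Group Γ] [DecidableEq Γ] {R : Type v} [Ring R] {c : GrPrimeDatum Γ R}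
variable {ι κ ι' κ' l : Type*} {α : ι → Γ} {β : κ → Γ} {α' : ι' → Γ} {β' : κ' → Γ} {δ : l → Γ}

/-! ### Homogeneous matrices and vectors -/

section Homogeneous

/-- `IsHomog` for matrices over arbitrary index types. -/
def Homog (c : GrPrimeDatum Γ R) (A : Matrix ι κ R) (α : ι → Γ) (β : κ → Γ) : Prop :=
  ∀ i j, A i j ∈ c.𝒜 (α i * (β j)⁻¹)

/-- The vectors whose `i`-th entry is homogeneous of degree `d i`. Columns of a matrix of
distribution `(α, β)` have `d = α` up to a right shift; rows of degree `γ` that can be placed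
under it have `d j = γ * (β j)⁻¹`. -/
def vectors (c : GrPrimeDatum Γ R) (d : ι → Γ) : AddSubgroup (ι → R) :=
  AddSubgroup.pi Set.univ fun i => c.𝒜 (d i)

lemma mem_vectors {d : ι → Γ} {x : ι → R} : x ∈ c.vectors d ↔ ∀ i, x i ∈ c.𝒜 (d i) := by
  simp [vectors, AddSubgroup.mem_pi]

lemma mem_of_mem_of_eq {γ δ : Γ} {r : R} (h : r ∈ c.𝒜 γ) (e : γ = δ) : r ∈ c.𝒜 δ := e ▸ h

lemma single_mem_vectors [DecidableEq ι] {d : ι → Γ} {i : ι} {r : R} (hr : r ∈ c.𝒜 (d i)) :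
    Pi.single i r ∈ c.vectors d := by
  refine mem_vectors.2 fun k => ?_
  obtain rfl | hk := eq_or_ne k i
  · simpa using hr
  · simp [hk]

lemma single_one_mem_col [DecidableEq ι] (d : ι → Γ) (i : ι) :
    Pi.single i 1 ∈ c.vectors fun k => d k * (d i)⁻¹ :=
  single_mem_vectors (by simpa using c.one_mem)

lemma single_one_mem_row [DecidableEq ι] (d : ι → Γ) (i : ι) :
    Pi.single i 1 ∈ c.vectors fun k => d i * (d k)⁻¹ :=
  single_mem_vectors (by simpa using c.one_mem)

lemma elim_mem_vectors {d : ι ⊕ κ → Γ} {x : ι → R} {y : κ → R}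
    (hx : x ∈ c.vectors (d ∘ Sum.inl)) (hy : y ∈ c.vectors (d ∘ Sum.inr)) :
    Sum.elim x y ∈ c.vectors d :=
  mem_vectors.2 (Sum.rec (mem_vectors.1 hx) (mem_vectors.1 hy))

namespace Homog

variable {A B : Matrix ι κ R}

lemma congr {ι κ : Type*} {A : Matrix ι κ R} {α α' : ι → Γ} {β β' : κ → Γ} (hA : c.Homog A α β)
    (h : ∀ i j, α i * (β j)⁻¹ = α' i * (β' j)⁻¹) : c.Homog A α' β' :=
  fun i j => mem_of_mem_of_eq (hA i j) (h i j)

lemma shift (hA : c.Homog A α β) (ε : Γ) : c.Homog A (fun i => α i * ε) (fun j => β j * ε) :=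
  hA.congr fun i j => by group

lemma submatrix (hA : c.Homog A α β) (e : ι' → ι) (f : κ' → κ) :
    c.Homog (A.submatrix e f) (α ∘ e) (β ∘ f) := fun i j => hA (e i) (f j)

lemma zero : c.Homog (0 : Matrix ι κ R) α β := fun _ _ => zero_mem _

lemma one [DecidableEq ι] : c.Homog (1 : Matrix ι ι R) α α := by
  intro i j
  rw [one_apply]
  split_ifs with h
  · simpa [h] using c.one_mem
  · exact zero_mem _

lemma neg (hA : c.Homog A α β) : c.Homog (-A) α β := fun i j => neg_mem (hA i j)

lemma add (hA : c.Homog A α β) (hB : c.Homog B α β) : c.Homog (A + B) α β :=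
  fun i j => add_mem (hA i j) (hB i j)

lemma mul [Fintype κ] {B : Matrix κ l R} (hA : c.Homog A α β) (hB : c.Homog B β δ) :
    c.Homog (A * B) α δ := fun i j => by
  rw [mul_apply]
  exact sum_mem fun k _ => mem_of_mem_of_eq (c.mul_mem (hA i k) (hB k j)) (by group)

lemma fromRows {B : Matrix ι' κ R} (hA : c.Homog A α β) (hB : c.Homog B α' β) :
    c.Homog (fromRows A B) (Sum.elim α α') β := Sum.rec hA hB

lemma fromCols {B : Matrix ι κ' R} (hA : c.Homog A α β) (hB : c.Homog B α β') :
    c.Homog (fromCols A B) α (Sum.elim β β') := fun i => Sum.rec (hA i) (hB i)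

lemma fromBlocks {B : Matrix ι κ' R} {C : Matrix ι' κ R} {D : Matrix ι' κ' R}
    (hA : c.Homog A α β) (hB : c.Homog B α β') (hC : c.Homog C α' β) (hD : c.Homog D α' β') :
    c.Homog (fromBlocks A B C D) (Sum.elim α α') (Sum.elim β β') :=
  Sum.rec (hA.fromCols hB) (hC.fromCols hD)

lemma replicateRow {γ : Γ} {f : κ → R} (hf : f ∈ c.vectors fun j => γ * (β j)⁻¹) :
    c.Homog (replicateRow Unit f) (fun _ => γ) β := fun _ j => mem_vectors.1 hf j

lemma replicateCol {x : ι → R} (hx : x ∈ c.vectors α) :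
    c.Homog (replicateCol Unit x) α fun _ => 1 := fun i _ => by simpa using mem_vectors.1 hx i

lemma vecMulVec {γ : Γ} {x : ι → R} {f : κ → R} (hx : x ∈ c.vectors α)
    (hf : f ∈ c.vectors fun j => γ * (β j)⁻¹) :
    c.Homog (vecMulVec x f) (fun i => α i * γ) β := fun i j =>
  mem_of_mem_of_eq (c.mul_mem (mem_vectors.1 hx i) (mem_vectors.1 hf j)) (by group)

lemma mulVec [Fintype κ] {ε : Γ} {u : κ → R} (hA : c.Homog A α β)
    (hu : u ∈ c.vectors fun j => β j * ε) : A *ᵥ u ∈ c.vectors fun i => α i * ε :=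
  mem_vectors.2 fun i => sum_mem fun j _ =>
    mem_of_mem_of_eq (c.mul_mem (hA i j) (mem_vectors.1 hu j)) (by group)

lemma updateCol [DecidableEq κ] {j : κ} {u : ι → R} (hA : c.Homog A α β)
    (hu : u ∈ c.vectors fun i => α i * (β j)⁻¹) : c.Homog (A.updateCol j u) α β := by
  intro i k
  rw [updateCol_apply]
  split_ifs with hk
  · simpa [hk] using mem_vectors.1 hu i
  · exact hA i k

lemma isHomogSq_submatrix {n : ℕ} {A : Matrix ι ι R} {β : ι → Γ} (hA : c.Homog A α β)
    (e f : Fin n → ι) : IsHomogSq c.𝒜 (A.submatrix e f) :=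
  ⟨α ∘ e, β ∘ f, fun i j => hA (e i) (f j)⟩

end Homog

end Homogeneous

/-! ### Singular matrices -/

section Singular

variable [Fintype ι] [Fintype κ]

/-- Membership in `P` for square matrices over an arbitrary finite index type; the enumeration of
the index type is immaterial by (PM6). -/
def IsSingular (c : GrPrimeDatum Γ R) (A : Matrix ι ι R) : Prop :=
  (⟨Fintype.card ι, A.submatrix (Fintype.equivFin ι).symm (Fintype.equivFin ι).symm⟩ : SqMat R) ∈
    c.P

lemma isSingular_iff {n : ℕ} (e f : Fin n ≃ ι) {A : Matrix ι ι R} :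
    c.IsSingular A ↔ (⟨n, A.submatrix e f⟩ : SqMat R) ∈ c.P := by
  obtain rfl : n = Fintype.card ι := by simpa using Fintype.card_congr e
  have renumber {e f e' f' : Fin (Fintype.card ι) ≃ ι} (h : ⟨_, A.submatrix e f⟩ ∈ c.P) :
      (⟨_, A.submatrix e' f'⟩ : SqMat R) ∈ c.P := by
    convert c.prime.pm6 _ (e'.trans e.symm) (f'.trans f.symm) h using 2
    ext
    simp
  exact ⟨renumber, renumber⟩

lemma isSingular_submatrix (e f : ι ≃ κ) (A : Matrix κ κ R) :
    c.IsSingular (A.submatrix e f) ↔ c.IsSingular A := by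
  let g := (Fintype.equivFin ι).symm
  rw [isSingular_iff g g, isSingular_iff (g.trans e) (g.trans f)]
  simp

lemma isSingular_mul_of_card_lt {X : Matrix ι κ R} {Y : Matrix κ ι R} {α' : ι → Γ}
    (hX : c.Homog X α β) (hY : c.Homog Y β α') (h : Fintype.card κ < Fintype.card ι) :
    c.IsSingular (X * Y) := by
  let e := (Fintype.equivFin ι).symm
  let f := (Fintype.equivFin κ).symm
  refine (isSingular_iff e e).2 (c.prime.pm1 _ ((hX.mul hY).isHomogSq_submatrix e e) fun full => ?_)
  have factorization : (X * Y).submatrix e e = X.submatrix e f * Y.submatrix f e :=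
    (submatrix_mul_equiv X Y e f e).symm
  exact (full _ _ _ (α ∘ e) (β ∘ f) (α' ∘ e) (fun _ _ => hX _ _) (fun _ _ => hY _ _)
    factorization).not_gt h

lemma isSingular_mul_of_row_eq_zero {X Y : Matrix ι ι R} {α' δ : ι → Γ} (hX : c.Homog X α δ)
    (hY : c.Homog Y δ α') {k : ι} (hk : ∀ j, Y k j = 0) : c.IsSingular (X * Y) := by
  classical
  let kept : {i // i ≠ k} → ι := Subtype.val
  have drop_row : X * Y = X.submatrix id kept * Y.submatrix kept id := by
    ext i j
    simp only [mul_apply, submatrix_apply, id_eq]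
    rw [Fintype.sum_eq_add_sum_subtype_ne _ k, hk, mul_zero, zero_add]
  rw [drop_row]
  exact isSingular_mul_of_card_lt (β := fun i : {i // i ≠ k} => δ i) (fun _ _ => hX _ _)
    (fun _ _ => hY _ _) (Fintype.card_subtype_lt (x := k) (by simp))

lemma isSingular_of_row_eq_zero {A : Matrix ι ι R} {α' : ι → Γ} (hA : c.Homog A α α') {k : ι}
    (hk : ∀ j, A k j = 0) : c.IsSingular A := by
  classical
  simpa using isSingular_mul_of_row_eq_zero .one hA hk

lemma IsSingular.updateCol_add [DecidableEq ι] {A : Matrix ι ι R} {α' : ι → Γ} {j : ι}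
    {u v : ι → R} (hu : c.Homog (A.updateCol j u) α α') (hv : c.Homog (A.updateCol j v) α α')
    (su : c.IsSingular (A.updateCol j u)) (sv : c.IsSingular (A.updateCol j v)) :
    c.IsSingular (A.updateCol j (u + v)) := by
  let e := (Fintype.equivFin ι).symm
  rw [isSingular_iff e e] at su sv ⊢
  refine c.prime.pm2 _ _ _ su sv
    ⟨⟨α ∘ e, α' ∘ e, fun _ _ => hu _ _, fun _ _ => hv _ _⟩, .inl ⟨e.symm j, ?_, ?_⟩⟩
  · intro i k hk
    have : e k ≠ j := fun h => hk (by simp [← h])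
    simp [this]
  · intro i k
    simp only [submatrix_apply, updateCol_apply, e.eq_symm_apply]
    split_ifs <;> rfl

lemma IsSingular.updateRow_add [DecidableEq ι] {A : Matrix ι ι R} {α' : ι → Γ} {i : ι}
    {f g : ι → R} (hf : c.Homog (A.updateRow i f) α α') (hg : c.Homog (A.updateRow i g) α α')
    (sf : c.IsSingular (A.updateRow i f)) (sg : c.IsSingular (A.updateRow i g)) :
    c.IsSingular (A.updateRow i (f + g)) := by
  let e := (Fintype.equivFin ι).symm
  rw [isSingular_iff e e] at sf sg ⊢
  refine c.prime.pm2 _ _ _ sf sg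
    ⟨⟨α ∘ e, α' ∘ e, fun _ _ => hf _ _, fun _ _ => hg _ _⟩, .inr ⟨e.symm i, ?_, ?_⟩⟩
  · intro k j hk
    have : e k ≠ i := fun h => hk (by simp [← h])
    simp [updateRow_apply, this]
  · intro k j
    simp only [submatrix_apply, updateRow_apply, e.eq_symm_apply]
    split_ifs <;> rfl

section ColumnOperations

variable [Fintype l] {M : Matrix (κ ⊕ l) κ R} {W : Matrix (κ ⊕ l) l R} {X : Matrix l κ R}
  {Y : Matrix l l R} {α : κ ⊕ l → Γ} {β' : l → Γ}

/-- Replacing a column of the first block by a combination of the columns of `W` makes the matrix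
non-full: it factors through a matrix with a zero row. -/
lemma isSingular_fromCols_updateCol [DecidableEq κ] (hM : c.Homog M α β) (hW : c.Homog W α δ)
    (hY : c.Homog Y δ β') {j : κ} {u : l → R} (hu : u ∈ c.vectors fun i => δ i * (β j)⁻¹) :
    c.IsSingular (fromCols (M.updateCol j (W *ᵥ u)) (W * Y)) := by
  classical
  let E : Matrix κ κ R := (1 : Matrix κ κ R).updateCol j 0
  have factorization : fromCols (M.updateCol j (W *ᵥ u)) (W * Y) =
      fromCols M W * fromBlocks E 0 (updateCol 0 j u) Y := by
    rw [fromCols_mul_fromBlocks]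
    ext i (k | k)
    · obtain rfl | hk := eq_or_ne k j
      · simp [E, mul_apply, mulVec, dotProduct]
      · simp [E, mul_apply, hk, one_apply]
    · simp
  rw [factorization]
  refine isSingular_mul_of_row_eq_zero (hM.fromCols hW)
    (Homog.fromBlocks (.updateCol .one (zero_mem _)) .zero (.updateCol .zero hu) hY)
    (k := .inl j) ?_
  rintro (k | k)
  · obtain rfl | hk := eq_or_ne k j
    · simp [E]
    · simp [E, hk, one_apply_ne' hk]
  · rfl

lemma IsSingular.fromCols_add_mul_updateCol [DecidableEq κ] (hM : c.Homog M α β)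
    (hW : c.Homog W α δ) (hY : c.Homog Y δ β') {j : κ} {u : l → R}
    (hu : u ∈ c.vectors fun i => δ i * (β j)⁻¹) (h : c.IsSingular (fromCols M (W * Y))) :
    c.IsSingular (fromCols (M + W * updateCol 0 j u) (W * Y)) := by
  classical
  let N := fromCols M (W * Y)
  have hN : c.Homog N α (Sum.elim β β') := hM.fromCols (hW.mul hY)
  have fromCols_updateCol (v : κ ⊕ l → R) :
      fromCols (M.updateCol j v) (W * Y) = N.updateCol (.inl j) v := by
    ext i (k | k) <;> simp [N, updateCol_apply]
  have added_column : M + W * updateCol 0 j u = M.updateCol j (M.col j + W *ᵥ u) := by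
    ext i k
    obtain rfl | hk := eq_or_ne k j
    · simp [mul_apply, mulVec, dotProduct]
    · simp [mul_apply, hk]
  have sM : c.IsSingular (N.updateCol (.inl j) (M.col j)) := by
    rwa [← fromCols_updateCol, show M.updateCol j (M.col j) = M from updateCol_eq_self M j]
  have sW : c.IsSingular (N.updateCol (.inl j) (W *ᵥ u)) := by
    rw [← fromCols_updateCol]
    exact isSingular_fromCols_updateCol hM hW hY hu
  rw [added_column, fromCols_updateCol]
  exact .updateCol_add (hN.updateCol (mem_vectors.2 fun i => hM i j))
    (hN.updateCol (hW.mulVec hu)) sM sW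

lemma IsSingular.fromCols_add_mul (hM : c.Homog M α β) (hW : c.Homog W α δ) (hX : c.Homog X δ β)
    (hY : c.Homog Y δ β') (h : c.IsSingular (fromCols M (W * Y))) :
    c.IsSingular (fromCols (M + W * X) (W * Y)) := by
  classical
  let Admissible (X : Matrix l κ R) : Prop := c.Homog X δ β ∧ ∀ M : Matrix (κ ⊕ l) κ R,
    c.Homog M α β → c.IsSingular (fromCols M (W * Y)) →
      c.IsSingular (fromCols (M + W * X) (W * Y))
  have admissible_column (j : κ) : Admissible (updateCol 0 j (X.col j)) := by
    have hXj : X.col j ∈ c.vectors fun i => δ i * (β j)⁻¹ := mem_vectors.2 fun i => hX i j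
    exact ⟨.updateCol .zero hXj, fun M hM s => s.fromCols_add_mul_updateCol hM hW hY hXj⟩
  have sum_columns : ∑ j, updateCol 0 j (X.col j) = X := by
    ext i k
    simp [Matrix.sum_apply, updateCol_apply]
  have admissible : Admissible (∑ j, updateCol 0 j (X.col j)) :=
    Finset.sum_induction _ Admissible
      (fun X₁ X₂ h₁ h₂ => ⟨h₁.1.add h₂.1, fun M hM s => by
        rw [Matrix.mul_add, ← add_assoc]
        exact h₂.2 _ (hM.add (hW.mul h₁.1)) (h₁.2 M hM s)⟩)
      ⟨.zero, fun M _ s => by simpa using s⟩ fun j _ => admissible_column j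
  rw [sum_columns] at admissible
  exact admissible.2 M hM h

lemma isSingular_fromCols_add_mul_iff (hM : c.Homog M α β) (hW : c.Homog W α δ)
    (hX : c.Homog X δ β) (hY : c.Homog Y δ β') :
    c.IsSingular (fromCols (M + W * X) (W * Y)) ↔ c.IsSingular (fromCols M (W * Y)) :=
  ⟨fun h => by simpa using h.fromCols_add_mul (hM.add (hW.mul hX)) hW hX.neg hY,
    fun h => h.fromCols_add_mul hM hW hX hY⟩

end ColumnOperations

section Blocks

variable {A : Matrix ι ι R} {B : Matrix κ κ R} {β : ι → Γ} {α' β' : κ → Γ}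

lemma isSingular_fromBlocks_iff_diagSum {m n : ℕ} (e : Fin m ≃ ι) (f : Fin n ≃ κ) :
    c.IsSingular (fromBlocks A 0 0 B) ↔
      (⟨m + n, diagSum (A.submatrix e e) (B.submatrix f f)⟩ : SqMat R) ∈ c.P := by
  let g : Fin (m + n) ≃ ι ⊕ κ := finSumFinEquiv.symm.trans (e.sumCongr f)
  have submatrix_eq :
      (fromBlocks A 0 0 B).submatrix g g = diagSum (A.submatrix e e) (B.submatrix f f) := by
    ext i j
    obtain ⟨i | i, rfl⟩ := finSumFinEquiv.surjective i <;>
      obtain ⟨j | j, rfl⟩ := finSumFinEquiv.surjective j <;> simp [g, diagSum]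
  rw [isSingular_iff g g, submatrix_eq]

lemma isSingular_fromBlocks_swap {A : Matrix ι ι R} {B : Matrix ι κ R} {C : Matrix κ ι R}
    {D : Matrix κ κ R} : c.IsSingular (fromBlocks A B C D) ↔ c.IsSingular (fromBlocks D C B A) := by
  rw [← isSingular_submatrix (Equiv.sumComm κ ι) (Equiv.sumComm κ ι)]
  simp

lemma isSingular_fromBlocks_diagonal (hA : c.Homog A α β) (hB : c.Homog B α' β') :
    c.IsSingular (fromBlocks A 0 0 B) ↔ c.IsSingular A ∨ c.IsSingular B := by
  let e := (Fintype.equivFin ι).symm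
  let f := (Fintype.equivFin κ).symm
  constructor
  · intro h
    exact c.prime.pm4 _ _ (hA.isHomogSq_submatrix e e) (hB.isHomogSq_submatrix f f)
      ((isSingular_fromBlocks_iff_diagSum e f).1 h)
  · rintro (h | h)
    · exact (isSingular_fromBlocks_iff_diagSum e f).2
        (c.prime.pm3 _ _ h (hB.isHomogSq_submatrix f f))
    · rw [isSingular_fromBlocks_swap]
      exact (isSingular_fromBlocks_iff_diagSum f e).2
        (c.prime.pm3 _ _ h (hA.isHomogSq_submatrix e e))

lemma isSingular_fromBlocks_lower {C : Matrix κ ι R} (hA : c.Homog A α β) (hB : c.Homog B α' β')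
    (hC : c.Homog C α' β) :
    c.IsSingular (fromBlocks A 0 C B) ↔ c.IsSingular A ∨ c.IsSingular B := by
  classical
  rw [← isSingular_fromBlocks_diagonal hA hB]
  have colop := isSingular_fromCols_add_mul_iff (hA.fromRows .zero)
    (W := fromRows (0 : Matrix ι κ R) 1) (Homog.zero.fromRows .one) hC hB
  have add_fromRows : fromRows A 0 + fromRows 0 C = fromRows A C := by
    ext (i | i) j <;> simp
  simpa [fromRows_mul, add_fromRows] using colop

lemma isSingular_fromBlocks_upper {C : Matrix ι κ R} (hA : c.Homog A α β) (hB : c.Homog B α' β')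
    (hC : c.Homog C α β') :
    c.IsSingular (fromBlocks A C 0 B) ↔ c.IsSingular A ∨ c.IsSingular B := by
  rw [isSingular_fromBlocks_swap, isSingular_fromBlocks_lower hB hA hC, or_comm]

end Blocks

lemma not_isSingular_one [DecidableEq ι] : ¬ c.IsSingular (1 : Matrix ι ι R) := by
  have one_fin (n : ℕ) : (⟨n, (1 : Matrix (Fin n) (Fin n) R)⟩ : SqMat R) ∉ c.P := by
    have diagSum_one (n : ℕ) : diagSum (1 : Matrix (Fin n) (Fin n) R)
        (1 : Matrix (Fin 1) (Fin 1) R) = 1 := by simp [diagSum]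
    have homog_one (n : ℕ) : IsHomogSq c.𝒜 (1 : Matrix (Fin n) (Fin n) R) :=
      ⟨1, 1, Homog.one (c := c)⟩
    induction n with
    | zero =>
      intro h
      refine c.prime.pm5 ?_
      simpa [diagSum_one] using c.prime.pm3 _ (1 : Matrix (Fin 1) (Fin 1) R) h (homog_one 1)
    | succ n ih =>
      intro h
      rw [← diagSum_one] at h
      exact (c.prime.pm4 _ _ (homog_one n) (homog_one 1) h).elim ih c.prime.pm5
  simpa [IsSingular] using one_fin (Fintype.card ι)

section Products

variable {A B : Matrix ι ι R} {β δ : ι → Γ}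

lemma isSingular_neg_mul (hA : c.Homog A α β) (hB : c.Homog B β δ) :
    c.IsSingular (-(A * B)) ↔ c.IsSingular A ∨ c.IsSingular B := by
  classical
  have hM : c.Homog (fromRows (0 : Matrix ι ι R) B) (Sum.elim α β) δ := Homog.zero.fromRows hB
  have colop := isSingular_fromCols_add_mul_iff hM (hA.fromRows .one) hB.neg .one
  have after : fromCols (fromRows 0 B + fromRows A 1 * -B) (fromRows A 1 * (1 : Matrix ι ι R)) =
      fromBlocks (-(A * B)) A 0 1 := by
    ext (i | i) (j | j) <;> simp
  have before : fromCols (fromRows 0 B) (fromRows A 1 * (1 : Matrix ι ι R)) =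
      (fromBlocks A 0 1 B).submatrix (Equiv.refl _) (Equiv.sumComm _ _) := by
    ext (i | i) (j | j) <;> simp
  rw [after, before, isSingular_submatrix, isSingular_fromBlocks_lower hA hB .one,
    isSingular_fromBlocks_upper (hA.mul hB).neg .one hA] at colop
  simpa [not_isSingular_one] using colop

lemma isSingular_mul (hA : c.Homog A α β) (hB : c.Homog B β δ) :
    c.IsSingular (A * B) ↔ c.IsSingular A ∨ c.IsSingular B := by
  classical
  have neg_iff : c.IsSingular (-A) ↔ c.IsSingular A := by
    simpa [not_isSingular_one] using isSingular_neg_mul hA .one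
  simpa [neg_iff] using isSingular_neg_mul hA.neg hB

lemma isSingular_mul_of_left (hA : c.Homog A α β) (hB : c.Homog B β δ)
    (h : ¬ c.IsSingular A) : c.IsSingular (A * B) ↔ c.IsSingular B := by
  simp [isSingular_mul hA hB, h]

lemma isSingular_mul_of_right (hA : c.Homog A α β) (hB : c.Homog B β δ)
    (h : ¬ c.IsSingular B) : c.IsSingular (A * B) ↔ c.IsSingular A := by
  simp [isSingular_mul hA hB, h]

end Products

end Singular

/-! ### Fractions and intertwiners -/

/-- A homogeneous square matrix outside `P` together with a distribution of it. -/
structure NonsingularMatrix (c : GrPrimeDatum Γ R) (ι : Type*) [Fintype ι] where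
  A : Matrix ι ι R
  α : ι → Γ
  β : ι → Γ
  homog : c.Homog A α β
  nonsing : ¬ c.IsSingular A

/-- A formal expression `f A⁻¹ x`, homogeneous of degree `γ`, with `A` outside `P`. The right
shift of the distribution of `A` is normalized so that the column `x` has degree `1`. -/
structure Fraction (c : GrPrimeDatum Γ R) (ι : Type*) [Fintype ι] (γ : Γ) extends
    NonsingularMatrix c ι where
  f : ι → R
  x : ι → R
  f_mem : f ∈ c.vectors fun j => γ * (β j)⁻¹
  x_mem : x ∈ c.vectors α

namespace Fraction

section Basic

variable [Fintype ι] [Fintype κ] {γ γ' : Γ} {p : c.Fraction ι γ} {q : c.Fraction κ γ}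

/-- The matrix `[[A, x], [f, 0]]`; over a field, its determinant is `-(det A) (f A⁻¹ x)`. -/
def bordered (p : c.Fraction ι γ) : Matrix (ι ⊕ Unit) (ι ⊕ Unit) R :=
  fromBlocks p.A (replicateCol Unit p.x) (replicateRow Unit p.f) 0

lemma homog_bordered (p : c.Fraction ι γ) :
    c.Homog p.bordered (Sum.elim p.α fun _ => γ) (Sum.elim p.β fun _ => 1) :=
  p.homog.fromBlocks (.replicateCol p.x_mem) (.replicateRow p.f_mem) .zero

/-- `f A⁻¹ x` is to become zero, read off from the bordered matrix. -/
def Vanishes (p : c.Fraction ι γ) : Prop := c.IsSingular p.bordered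

/-- A pair `(U, V)` carrying the linear system behind `p` to the one behind `q`: from
`V A⁻¹ = B⁻¹ U` one gets `f A⁻¹ x = g V A⁻¹ x = g B⁻¹ U x = g B⁻¹ y`. -/
def Intertwines (p : c.Fraction ι γ) (q : c.Fraction κ γ) : Prop :=
  ∃ U V : Matrix κ ι R, c.Homog U q.α p.α ∧ c.Homog V q.β p.β ∧
    q.A * V = U * p.A ∧ U *ᵥ p.x = q.x ∧ q.f ᵥ* V = p.f

lemma not_isSingular_fromBlocks_one_upper [DecidableEq ι] [DecidableEq κ] {X : Matrix ι κ R}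
    (hX : c.Homog X α β) : ¬ c.IsSingular (fromBlocks 1 X 0 1) := by
  simp [isSingular_fromBlocks_upper .one .one hX, not_isSingular_one]

/-- Both bordered matrices appear as diagonal blocks of one matrix, before and after adding
multiples of rows and columns prescribed by the intertwiner. -/
lemma Intertwines.vanishes_iff (h : p.Intertwines q) : p.Vanishes ↔ q.Vanishes := by
  classical
  obtain ⟨U, V, hU, hV, hA, hx, hf⟩ := h
  let F : Matrix (ι ⊕ Unit) κ R := fromRows 0 (replicateRow Unit q.f)
  let X : Matrix ι (κ ⊕ Unit) R := fromCols 0 (replicateCol Unit p.x)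
  let L : Matrix (κ ⊕ (ι ⊕ Unit)) (κ ⊕ (ι ⊕ Unit)) R := fromBlocks 1 (fromCols U 0) 0 1
  let Q : Matrix (κ ⊕ (ι ⊕ Unit)) (κ ⊕ (ι ⊕ Unit)) R := fromBlocks 1 (fromCols (-V) 0) 0 1
  let swap : ι ⊕ (κ ⊕ Unit) ≃ κ ⊕ (ι ⊕ Unit) := (Equiv.sumAssoc ι κ Unit).symm.trans
    (((Equiv.sumComm ι κ).sumCongr (.refl Unit)).trans (Equiv.sumAssoc κ ι Unit))
  have hF : c.Homog F (Sum.elim p.α fun _ => γ) q.β := Homog.zero.fromRows (.replicateRow q.f_mem)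
  have hX : c.Homog X p.α (Sum.elim q.β fun _ => 1) := Homog.zero.fromCols (.replicateCol p.x_mem)
  have hUp : c.Homog (fromCols U 0) q.α (Sum.elim p.α fun _ : Unit => γ) := hU.fromCols .zero
  have hVp : c.Homog (fromCols (-V) 0) q.β (Sum.elim p.β fun _ : Unit => 1) :=
    hV.neg.fromCols .zero
  have hL := Homog.fromBlocks .one hUp .zero .one
  have hQ := Homog.fromBlocks .one hVp .zero .one
  have before : p.Vanishes ↔ c.IsSingular (fromBlocks q.A 0 F p.bordered) := by
    simp [Vanishes, isSingular_fromBlocks_lower q.homog p.homog_bordered hF, q.nonsing]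
  have after : q.Vanishes ↔ c.IsSingular (fromBlocks p.A X 0 q.bordered) := by
    simp [Vanishes, isSingular_fromBlocks_upper p.homog q.homog_bordered hX, p.nonsing]
  have hBefore := q.homog.fromBlocks .zero hF p.homog_bordered
  have operations : (L * fromBlocks q.A 0 F p.bordered * Q).submatrix swap swap =
      fromBlocks p.A X 0 q.bordered := by
    simp only [L, Q, F, X, bordered, ← hx, ← hf, fromBlocks_multiply, fromCols_mul_fromRows,
      fromCols_mul_fromBlocks, mul_fromCols, fromRows_mul, Matrix.one_mul, Matrix.mul_one,
      Matrix.zero_mul, Matrix.mul_zero, add_zero, zero_add]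
    ext (i | i | i) (j | j | j) <;>
      simp [swap, ← hA, mul_apply, mulVec, vecMul, dotProduct]
  rw [before, after, ← operations, isSingular_submatrix,
    isSingular_mul_of_right (hL.mul hBefore) hQ (not_isSingular_fromBlocks_one_upper hVp),
    isSingular_mul_of_left hL hBefore (not_isSingular_fromBlocks_one_upper hUp)]

lemma Intertwines.of_equiv (e : κ ≃ ι) (hA : ∀ i j, q.A i j = p.A (e i) (e j))
    (hf : ∀ j, q.f j = p.f (e j)) (hx : ∀ i, q.x i = p.x (e i)) (hα : ∀ i, q.α i = p.α (e i))
    (hβ : ∀ i, q.β i = p.β (e i)) : p.Intertwines q := by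
  classical
  let E : Matrix κ ι R := (1 : Matrix ι ι R).submatrix e id
  have homog_E {η : κ → Γ} {θ : ι → Γ} (h : ∀ i, η i = θ (e i)) : c.Homog E η θ := fun i j => by
    rw [h i]
    exact Homog.one (e i) j
  refine ⟨E, E, homog_E hα, homog_E hβ, ?_, ?_, ?_⟩
  · ext i j
    obtain ⟨j, rfl⟩ := e.surjective j
    simp [E, mul_apply, one_apply, hA]
  · ext i
    simp [E, mulVec, dotProduct, one_apply, hx]
  · ext j
    obtain ⟨j, rfl⟩ := e.surjective j
    simp [E, vecMul, dotProduct, one_apply, hf]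

lemma Intertwines.refl (p : c.Fraction ι γ) : p.Intertwines p :=
  .of_equiv (.refl ι) (fun _ _ => rfl) (fun _ => rfl) (fun _ => rfl) (fun _ => rfl) fun _ => rfl

lemma vanishes_of_f_eq_zero (h : p.f = 0) : p.Vanishes :=
  isSingular_of_row_eq_zero p.homog_bordered (k := .inr ()) (by simp [bordered, h])

/-- `g A⁻¹ x` in place of `f A⁻¹ x`. -/
def withF (p : c.Fraction ι γ) (g : ι → R) (hg : g ∈ c.vectors fun j => γ' * (p.β j)⁻¹) :
    c.Fraction ι γ' := { p with f := g, f_mem := hg }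

/-- `p` as a fraction of the propositionally equal degree `γ'`. -/
def castDegree (p : c.Fraction ι γ) (h : γ = γ') : c.Fraction ι γ' := p.withF p.f (h ▸ p.f_mem)

/-- `-(f A⁻¹ x)`. -/
def neg (p : c.Fraction ι γ) : c.Fraction ι γ := p.withF (-p.f) (neg_mem p.f_mem)

lemma vanishes_withF_add {f₁ f₂ : ι → R} (h₁ : f₁ ∈ c.vectors fun j => γ * (p.β j)⁻¹)
    (h₂ : f₂ ∈ c.vectors fun j => γ * (p.β j)⁻¹) (v₁ : (p.withF f₁ h₁).Vanishes)
    (v₂ : (p.withF f₂ h₂).Vanishes) : (p.withF (f₁ + f₂) (add_mem h₁ h₂)).Vanishes := by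
  classical
  have bordered_withF {g : ι → R} (hg : g ∈ c.vectors fun j => γ * (p.β j)⁻¹) :
      (p.withF g hg).bordered = p.bordered.updateRow (.inr ()) (Sum.elim g 0) := by
    ext (i | i) (j | j) <;> simp [bordered, withF, updateRow_apply]
  have homog_withF {g : ι → R} (hg : g ∈ c.vectors fun j => γ * (p.β j)⁻¹) :=
    bordered_withF hg ▸ (p.withF g hg).homog_bordered
  have sum_rows : Sum.elim (f₁ + f₂) (0 : Unit → R) = Sum.elim f₁ 0 + Sum.elim f₂ 0 := by
    ext (i | i) <;> simp
  rw [Vanishes, bordered_withF] at v₁ v₂ ⊢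
  rw [sum_rows]
  exact v₁.updateRow_add (homog_withF h₁) (homog_withF h₂) v₂

lemma vanishes_neg_iff : p.neg.Vanishes ↔ p.Vanishes := by
  have neg_of {p : c.Fraction ι γ} (h : p.Vanishes) : p.neg.Vanishes := by
    classical
    have hJ : c.Homog (fromBlocks 1 0 0 (-1) : Matrix (ι ⊕ Unit) (ι ⊕ Unit) R)
        (Sum.elim p.α fun _ => γ) (Sum.elim p.α fun _ => γ) :=
      Homog.one.fromBlocks .zero .zero Homog.one.neg
    have factorization : p.neg.bordered = fromBlocks 1 0 0 (-1) * p.bordered := by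
      ext (i | i) (j | j) <;> simp [bordered, neg, withF, fromBlocks_multiply]
    rw [Vanishes, factorization]
    exact (isSingular_mul hJ p.homog_bordered).2 (.inr h)
  exact ⟨fun h => by simpa [neg, withF] using neg_of h, neg_of⟩

/-- The sum, as `(f, g) (A ⊕ B)⁻¹ (x, y)`. -/
def add (p : c.Fraction ι γ) (q : c.Fraction κ γ) : c.Fraction (ι ⊕ κ) γ where
  A := fromBlocks p.A 0 0 q.A
  α := Sum.elim p.α q.α
  β := Sum.elim p.β q.β
  f := Sum.elim p.f q.f
  x := Sum.elim p.x q.x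
  homog := p.homog.fromBlocks .zero .zero q.homog
  nonsing := by simp [isSingular_fromBlocks_diagonal p.homog q.homog, p.nonsing, q.nonsing]
  f_mem := elim_mem_vectors p.f_mem q.f_mem
  x_mem := elim_mem_vectors p.x_mem q.x_mem

/-- The difference of two fractions. -/
abbrev sub (p : c.Fraction ι γ) (q : c.Fraction κ γ) : c.Fraction (ι ⊕ κ) γ := p.add q.neg

lemma add_intertwines_left (hq : q.f = 0) : (p.add q).Intertwines p := by
  classical
  exact ⟨fromCols 1 0, fromCols 1 0, Homog.one.fromCols .zero, Homog.one.fromCols .zero,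
    by simp [add, fromCols_mul_fromBlocks], by simp [add], by simp [add, hq]⟩

lemma add_comm_intertwines (p : c.Fraction ι γ) (q : c.Fraction κ γ) :
    (p.add q).Intertwines (q.add p) := by
  refine .of_equiv (Equiv.sumComm κ ι) ?_ ?_ ?_ ?_ ?_
  · rintro (i | i) (j | j) <;> rfl
  all_goals rintro (i | i) <;> rfl

lemma Vanishes.add (hp : p.Vanishes) (hq : q.Vanishes) : (p.add q).Vanishes := by
  let p' := p.add (q.withF 0 (zero_mem _))
  let q' := (p.withF 0 (zero_mem _)).add q
  have hp' : p'.Vanishes := (add_intertwines_left rfl).vanishes_iff.2 hp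
  have hq' : q'.Vanishes :=
    (add_comm_intertwines _ _).vanishes_iff.2 ((add_intertwines_left rfl).vanishes_iff.2 hq)
  have sum_rows : p'.f + q'.f = (p.add q).f := by
    ext (i | i) <;> simp [p', q', Fraction.add, withF]
  simpa only [withF, sum_rows] using vanishes_withF_add (p := p.add q) p'.f_mem q'.f_mem hp' hq'

end Basic

section Rel

variable [Fintype ι] [Fintype κ] [Fintype ι'] [Fintype κ'] [Fintype l] {γ γ' : Γ}
  {p : c.Fraction ι γ} {q : c.Fraction κ γ} {r : c.Fraction l γ}
  {p' : c.Fraction ι' γ} {q' : c.Fraction κ' γ}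

/-- Equality of the values of two fractions. -/
def Rel (p : c.Fraction ι γ) (q : c.Fraction κ γ) : Prop := (p.sub q).Vanishes

lemma Intertwines.rel (h : p.Intertwines q) : p.Rel q := by
  classical
  obtain ⟨U, V, hU, hV, hA, hx, hf⟩ := h
  have graph : (p.withF 0 (zero_mem _)).Intertwines (p.sub q) :=
    ⟨fromRows 1 U, fromRows 1 V, Homog.one.fromRows hU, Homog.one.fromRows hV,
      by simp [add, neg, withF, fromBlocks_mul_fromRows, fromRows_mul, hA],
      by simp [add, neg, withF, fromRows_mulVec, hx],
      by simp [add, neg, withF, hf, neg_vecMul]⟩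
  exact graph.vanishes_iff.1 (vanishes_of_f_eq_zero rfl)

lemma Rel.refl (p : c.Fraction ι γ) : p.Rel p := (Intertwines.refl p).rel

lemma Rel.symm (h : p.Rel q) : q.Rel p := by
  have flip : (p.sub q).neg.Intertwines (q.sub p) := by
    refine .of_equiv (Equiv.sumComm κ ι) ?_ ?_ ?_ ?_ ?_
    · rintro (i | i) (j | j) <;> rfl
    all_goals rintro (i | i) <;> simp [add, neg, withF]
  exact flip.vanishes_iff.1 (vanishes_neg_iff.2 h)

/-- `(p - q) + (q - r)` and `p - r` both receive an intertwiner from `(p - r) + 0 q`. -/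
lemma Rel.trans (hpq : p.Rel q) (hqr : q.Rel r) : p.Rel r := by
  classical
  let E : Matrix ((ι ⊕ κ) ⊕ (κ ⊕ l)) ((ι ⊕ l) ⊕ κ) R :=
    fromBlocks (fromBlocks 1 0 0 0) (fromRows 0 1) (fromBlocks 0 0 0 1) (fromRows 1 0)
  have homog_E {η : ι → Γ} {θ : κ → Γ} {ζ : l → Γ} :
      c.Homog E (Sum.elim (Sum.elim η θ) (Sum.elim θ ζ)) (Sum.elim (Sum.elim η ζ) θ) :=
    (Homog.one.fromBlocks .zero .zero .zero).fromBlocks (Homog.zero.fromRows .one)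
      (Homog.zero.fromBlocks .zero .zero .one) (Homog.one.fromRows .zero)
  have telescope :
      ((p.sub r).add (q.withF 0 (zero_mem _))).Intertwines ((p.sub q).add (q.sub r)) := by
    refine ⟨E, E, homog_E, homog_E, ?_, ?_, ?_⟩
    · simp only [E, add, neg, withF]
      ext ((i | i) | (i | i)) ((j | j) | j) <;> simp [fromBlocks_multiply, fromBlocks_mul_fromRows]
    · simp only [E, add, neg, withF]
      ext ((i | i) | (i | i)) <;> simp [fromBlocks_mulVec, fromRows_mulVec]
    · simp only [E, add, neg, withF]
      ext ((j | j) | j) <;> simp [vecMul_fromBlocks]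
  exact (add_intertwines_left rfl).vanishes_iff.1 (telescope.vanishes_iff.2 (Vanishes.add hpq hqr))

lemma Rel.add (hp : p.Rel p') (hq : q.Rel q') : (p.add q).Rel (p'.add q') := by
  have interchange : ((p.sub p').add (q.sub q')).Intertwines ((p.add q).sub (p'.add q')) := by
    refine .of_equiv (Equiv.sumSumSumComm ι κ ι' κ') ?_ ?_ ?_ ?_ ?_
    · rintro ((i | i) | (i | i)) ((j | j) | (j | j)) <;> rfl
    all_goals rintro ((i | i) | (i | i)) <;> rfl
  exact interchange.vanishes_iff.1 (Vanishes.add hp hq)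

lemma Rel.neg (h : p.Rel q) : p.neg.Rel q.neg := by
  have neg_sub : (p.sub q).neg.Intertwines (p.neg.sub q.neg) := by
    refine .of_equiv (.refl _) (fun _ _ => rfl) ?_ (fun _ => rfl) (fun _ => rfl) fun _ => rfl
    rintro (i | i) <;> rfl
  exact neg_sub.vanishes_iff.1 (vanishes_neg_iff.2 h)

lemma add_assoc_intertwines (p : c.Fraction ι γ) (q : c.Fraction κ γ) (r : c.Fraction l γ) :
    ((p.add q).add r).Intertwines (p.add (q.add r)) := by
  refine .of_equiv (Equiv.sumAssoc ι κ l).symm ?_ ?_ ?_ ?_ ?_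
  · rintro (i | i | i) (j | j | j) <;> rfl
  all_goals rintro (i | i | i) <;> rfl

lemma neg_add_vanishes (p : c.Fraction ι γ) : (p.neg.add p).Vanishes :=
  (add_comm_intertwines _ _).vanishes_iff.1 (Rel.refl p)

/-- The fraction `1 · 1⁻¹ · r`. -/
def ofR (r : R) (hr : r ∈ c.𝒜 γ) : c.Fraction Unit γ where
  A := 1
  α := fun _ => γ
  β := fun _ => γ
  f := 1
  x := fun _ => r
  homog := .one
  nonsing := not_isSingular_one
  f_mem := mem_vectors.2 fun _ => by simpa using c.one_mem
  x_mem := mem_vectors.2 fun _ => hr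

/-- The fraction `0 · 1⁻¹ · 0`. -/
def zero (γ : Γ) : c.Fraction Unit γ := (ofR (γ := γ) 0 (zero_mem _)).withF 0 (zero_mem _)

lemma rel_zero_iff : p.Rel (zero γ) ↔ p.Vanishes :=
  (add_intertwines_left (by simp [zero, neg, withF])).vanishes_iff

lemma Rel.vanishes_iff (h : p.Rel q) : p.Vanishes ↔ q.Vanishes := by
  rw [← rel_zero_iff, ← rel_zero_iff]
  exact ⟨h.symm.trans, h.trans⟩

/-- `p` with its index type renumbered. -/
def reindex (e : κ ≃ ι) (p : c.Fraction ι γ) : c.Fraction κ γ where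
  A := p.A.submatrix e e
  α := p.α ∘ e
  β := p.β ∘ e
  f := p.f ∘ e
  x := p.x ∘ e
  homog := fun i j => p.homog (e i) (e j)
  nonsing := by simpa [isSingular_submatrix] using p.nonsing
  f_mem := mem_vectors.2 fun j => mem_vectors.1 p.f_mem (e j)
  x_mem := mem_vectors.2 fun i => mem_vectors.1 p.x_mem (e i)

lemma reindex_rel (e : κ ≃ ι) (p : c.Fraction ι γ) : (p.reindex e).Rel p :=
  (Intertwines.of_equiv e (fun _ _ => rfl) (fun _ => rfl) (fun _ => rfl) (fun _ => rfl)
    fun _ => rfl).rel.symm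

end Rel

section Mul

variable [Fintype ι] [Fintype κ] [Fintype ι'] [Fintype κ'] [Fintype l] {γ γ' δ ε : Γ}

/-- The product: in the system with matrix `[[A, -x g], [0, B]]` and right-hand side `(0, y)`, the
second block of the solution is `B⁻¹ y` and the first one is `A⁻¹ x (g B⁻¹ y)`. -/
def mul (p : c.Fraction ι γ) (q : c.Fraction κ δ) : c.Fraction (ι ⊕ κ) (γ * δ) where
  A := fromBlocks p.A (-vecMulVec p.x q.f) 0 q.A
  α := Sum.elim (fun i => p.α i * δ) q.α
  β := Sum.elim (fun j => p.β j * δ) q.β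
  f := Sum.elim p.f 0
  x := Sum.elim 0 q.x
  homog := (p.homog.shift δ).fromBlocks (Homog.vecMulVec p.x_mem q.f_mem).neg .zero q.homog
  nonsing := by
    simp [isSingular_fromBlocks_upper (p.homog.shift δ) q.homog
      (Homog.vecMulVec p.x_mem q.f_mem).neg, p.nonsing, q.nonsing]
  f_mem := elim_mem_vectors (mem_vectors.2 fun j => mem_of_mem_of_eq (mem_vectors.1 p.f_mem j)
    (by simp [mul_assoc])) (zero_mem _)
  x_mem := elim_mem_vectors (zero_mem _) q.x_mem

lemma mul_vanishes_iff {p : c.Fraction ι γ} {q : c.Fraction κ δ} :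
    (p.mul q).Vanishes ↔ p.Vanishes ∨ q.Vanishes := by
  classical
  let swap : (ι ⊕ κ) ⊕ Unit ≃ (ι ⊕ Unit) ⊕ κ := (Equiv.sumAssoc ι κ Unit).trans
    (((Equiv.refl ι).sumCongr (Equiv.sumComm κ Unit)).trans (Equiv.sumAssoc ι Unit κ).symm)
  let assoc : (ι ⊕ κ) ⊕ Unit ≃ ι ⊕ (κ ⊕ Unit) := Equiv.sumAssoc ι κ Unit
  let L := (fromBlocks p.bordered 0 0 (1 : Matrix κ κ R)).submatrix swap swap
  let N := (fromBlocks (1 : Matrix ι ι R) 0 0 q.neg.bordered).submatrix assoc assoc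
  have factorization : (p.mul q).bordered = L * N := by
    ext ((i | i) | i) ((j | j) | j) <;>
      simp [L, N, swap, assoc, bordered, mul, neg, withF, mul_apply, vecMulVec, one_apply]
  have hp := p.homog_bordered.shift δ
  have hq := q.neg.homog_bordered
  have middle : Sum.elim (fun j => Sum.elim p.β (fun _ => 1) j * δ) q.α ∘ swap =
      Sum.elim (fun j => p.β j * δ) (Sum.elim q.α fun _ => δ) ∘ assoc := by
    ext ((i | i) | i) <;> simp [swap, assoc]
  have hL := (hp.fromBlocks .zero .zero (.one (α := q.α))).submatrix swap swap
  have hN :=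
    (Homog.fromBlocks (.one (α := fun j => p.β j * δ)) .zero .zero hq).submatrix assoc assoc
  rw [middle] at hL
  rw [Vanishes, factorization, isSingular_mul hL hN, isSingular_submatrix, isSingular_submatrix,
    isSingular_fromBlocks_diagonal hp (.one (α := q.α)),
    isSingular_fromBlocks_diagonal (.one (α := p.α)) hq]
  simp only [not_isSingular_one, or_false, false_or]
  exact or_congr Iff.rfl vanishes_neg_iff

lemma neg_mul (p : c.Fraction ι γ) (q : c.Fraction κ δ) : p.neg.mul q = (p.mul q).neg := by
  simp only [neg, withF, mul, ← Sum.elim_neg_neg, neg_zero]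

lemma mul_assoc_intertwines (p : c.Fraction ι γ) (q : c.Fraction κ δ) (r : c.Fraction l ε) :
    (((p.mul q).mul r).castDegree (mul_assoc γ δ ε)).Intertwines (p.mul (q.mul r)) := by
  refine .of_equiv (Equiv.sumAssoc ι κ l).symm ?_ ?_ ?_ ?_ ?_
  · rintro (i | i | i) (j | j | j) <;> simp [castDegree, withF, mul, vecMulVec]
  all_goals rintro (i | i | i) <;> simp [castDegree, withF, mul, mul_assoc]

lemma add_mul_intertwines (p : c.Fraction ι γ) (p' : c.Fraction ι' γ) (q : c.Fraction κ δ) :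
    ((p.add p').mul q).Intertwines ((p.mul q).add (p'.mul q)) := by
  classical
  let E : Matrix ((ι ⊕ κ) ⊕ (ι' ⊕ κ)) ((ι ⊕ ι') ⊕ κ) R :=
    fromBlocks (fromBlocks 1 0 0 0) (fromRows 0 1) (fromBlocks 0 1 0 0) (fromRows 0 1)
  have homog_E (η : ι → Γ) (θ : ι' → Γ) (ζ : κ → Γ) :
      c.Homog E (Sum.elim (Sum.elim (fun i => η i * δ) ζ) (Sum.elim (fun i => θ i * δ) ζ))
        (Sum.elim (fun i => Sum.elim η θ i * δ) ζ) := by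
    have h : c.Homog E (Sum.elim (Sum.elim (fun i => η i * δ) ζ) (Sum.elim (fun i => θ i * δ) ζ))
        (Sum.elim (Sum.elim (fun i => η i * δ) fun i => θ i * δ) ζ) :=
      (Homog.one.fromBlocks .zero .zero .zero).fromBlocks (Homog.zero.fromRows .one)
        (Homog.zero.fromBlocks .one .zero .zero) (Homog.zero.fromRows .one)
    exact h.congr (by rintro i ((j | j) | j) <;> rfl)
  refine ⟨E, E, homog_E _ _ _, homog_E _ _ _, ?_, ?_, ?_⟩
  · have outer : vecMulVec (Sum.elim p.x p'.x) q.f =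
        fromRows (vecMulVec p.x q.f) (vecMulVec p'.x q.f) := by
      ext (i | i) j <;> rfl
    ext ((i | i) | (i | i)) ((j | j) | j) <;>
      simp [E, mul, add, outer, fromBlocks_multiply, fromBlocks_mul_fromRows, fromRows_mul]
  · ext ((i | i) | (i | i)) <;> simp [E, mul, add, fromBlocks_mulVec]
  · ext ((j | j) | j) <;> simp [E, mul, add, vecMul_fromBlocks]

lemma mul_add_intertwines (p : c.Fraction ι γ) (q : c.Fraction κ δ) (q' : c.Fraction κ' δ) :
    ((p.mul q).add (p.mul q')).Intertwines (p.mul (q.add q')) := by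
  classical
  let E : Matrix (ι ⊕ (κ ⊕ κ')) ((ι ⊕ κ) ⊕ (ι ⊕ κ')) R :=
    fromBlocks (fromCols 1 0) (fromCols 1 0) (fromBlocks 0 1 0 0) (fromBlocks 0 0 0 1)
  have homog_E {η : ι → Γ} {θ : κ → Γ} {ζ : κ' → Γ} :
      c.Homog E (Sum.elim η (Sum.elim θ ζ)) (Sum.elim (Sum.elim η θ) (Sum.elim η ζ)) :=
    (Homog.one.fromCols .zero).fromBlocks (Homog.one.fromCols .zero)
      (Homog.zero.fromBlocks .one .zero .zero) (Homog.zero.fromBlocks .zero .zero .one)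
  refine ⟨E, E, homog_E, homog_E, ?_, ?_, ?_⟩
  · have outer : vecMulVec p.x (Sum.elim q.f q'.f) =
        fromCols (vecMulVec p.x q.f) (vecMulVec p.x q'.f) := by
      ext i (j | j) <;> rfl
    ext (i | i | i) ((j | j) | (j | j)) <;>
      simp [E, mul, add, outer, fromBlocks_multiply, fromCols_mul_fromBlocks, mul_fromCols]
  · ext (i | i | i) <;> simp [E, mul, add, fromBlocks_mulVec]
  · ext ((j | j) | (j | j)) <;> simp [E, mul, add, vecMul_fromBlocks]

lemma mul_neg_intertwines (p : c.Fraction ι γ) (q : c.Fraction κ δ) :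
    (p.mul q.neg).Intertwines (p.mul q).neg := by
  classical
  let J : Matrix (ι ⊕ κ) (ι ⊕ κ) R := fromBlocks (-1) 0 0 1
  have homog_J {η : ι → Γ} {θ : κ → Γ} : c.Homog J (Sum.elim η θ) (Sum.elim η θ) :=
    Homog.one.neg.fromBlocks .zero .zero .one
  refine ⟨J, J, homog_J, homog_J, ?_, ?_, ?_⟩
  · simp [J, mul, neg, withF, fromBlocks_multiply]
  · simp [J, mul, neg, withF, fromBlocks_mulVec]
  · simp [J, mul, neg, withF, vecMul_fromBlocks, vecMul_neg, ← Sum.elim_neg_neg]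

lemma smul_f_mem {r : R} (hr : r ∈ c.𝒜 γ) (q : c.Fraction κ δ) :
    r • q.f ∈ c.vectors fun j => γ * δ * (q.β j)⁻¹ :=
  mem_vectors.2 fun j => mem_of_mem_of_eq (c.mul_mem hr (mem_vectors.1 q.f_mem j))
    (mul_assoc _ _ _).symm

lemma ofR_mul_intertwines {r : R} (hr : r ∈ c.𝒜 γ) (q : c.Fraction κ δ) :
    (q.withF (r • q.f) (smul_f_mem hr q)).Intertwines ((ofR r hr).mul q) := by
  classical
  have hV : c.Homog (replicateRow Unit (r • q.f)) (fun _ => γ * δ) q.β :=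
    .replicateRow (smul_f_mem hr q)
  refine ⟨fromRows 0 1, fromRows (replicateRow Unit (r • q.f)) 1, Homog.zero.fromRows .one,
    hV.fromRows .one, ?_, ?_, ?_⟩
  · ext (i | i) j <;> simp [mul, ofR, withF, fromBlocks_mul_fromRows, fromRows_mul, vecMulVec]
  · simp [mul, ofR, withF, fromRows_mulVec]
  · ext j
    simp [mul, ofR, withF, vecMul, dotProduct]

lemma mul_ofR_intertwines {p : c.Fraction ι γ} {r : R} (hr : r ∈ c.𝒜 δ)
    {q : c.Fraction ι (γ * δ)} (hA : q.A = p.A) (hf : q.f = p.f) (hx : ∀ i, q.x i = p.x i * r)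
    (hα : ∀ i, q.α i = p.α i * δ) (hβ : ∀ i, q.β i = p.β i * δ) :
    (p.mul (ofR r hr)).Intertwines q := by
  classical
  have hU : c.Homog (replicateCol Unit p.x) (fun i => p.α i * δ) fun _ => δ := fun i _ =>
    mem_of_mem_of_eq (mem_vectors.1 p.x_mem i) (by simp)
  refine ⟨fromCols 1 (replicateCol Unit p.x), fromCols 1 0, ?_, ?_, ?_, ?_, ?_⟩
  · rw [funext hα]
    exact Homog.one.fromCols hU
  · rw [funext hβ]
    exact Homog.one.fromCols .zero
  · ext i (j | j) <;> simp [mul, ofR, hA, mul_fromCols, fromCols_mul_fromBlocks, vecMulVec]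
  · ext i
    simp [mul, ofR, hx, mulVec, dotProduct]
  · simp [mul, hf]

lemma Rel.mul_right {p : c.Fraction ι γ} {p' : c.Fraction ι' γ} (h : p.Rel p')
    (q : c.Fraction κ δ) : (p.mul q).Rel (p'.mul q) := by
  have vanishes := (add_mul_intertwines p p'.neg q).vanishes_iff.1 (mul_vanishes_iff.2 (.inl h))
  rwa [neg_mul] at vanishes

lemma Rel.mul_left (p : c.Fraction ι γ) {q : c.Fraction κ δ} {q' : c.Fraction κ' δ}
    (h : q.Rel q') : (p.mul q).Rel (p.mul q') := by
  have vanishes := (mul_add_intertwines p q q'.neg).vanishes_iff.2 (mul_vanishes_iff.2 (.inr h))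
  exact ((Rel.refl (p.mul q)).add (mul_neg_intertwines p q').rel).vanishes_iff.1 vanishes

end Mul

section Expansion

variable [Fintype ι] {γ : Γ}

/-- `f A⁻¹ y` in place of `f A⁻¹ x`. -/
def withX (p : c.Fraction ι γ) (y : ι → R) (hy : y ∈ c.vectors p.α) : c.Fraction ι γ :=
  { p with x := y, x_mem := hy }

lemma withF_add_intertwines (p : c.Fraction ι γ) {f₁ f₂ : ι → R}
    (h₁ : f₁ ∈ c.vectors fun j => γ * (p.β j)⁻¹) (h₂ : f₂ ∈ c.vectors fun j => γ * (p.β j)⁻¹) :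
    (p.withF (f₁ + f₂) (add_mem h₁ h₂)).Intertwines ((p.withF f₁ h₁).add (p.withF f₂ h₂)) := by
  classical
  exact ⟨fromRows 1 1, fromRows 1 1, Homog.one.fromRows .one, Homog.one.fromRows .one,
    by simp [add, withF, fromBlocks_mul_fromRows, fromRows_mul], by simp [add, withF],
    by simp [add, withF]⟩

lemma withX_add_intertwines (p : c.Fraction ι γ) {x₁ x₂ : ι → R} (h₁ : x₁ ∈ c.vectors p.α)
    (h₂ : x₂ ∈ c.vectors p.α) :
    ((p.withX x₁ h₁).add (p.withX x₂ h₂)).Intertwines (p.withX (x₁ + x₂) (add_mem h₁ h₂)) := by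
  classical
  exact ⟨fromCols 1 1, fromCols 1 1, Homog.one.fromCols .one, Homog.one.fromCols .one,
    by simp [add, withX, fromCols_mul_fromBlocks, mul_fromCols], by simp [add, withX],
    by simp [add, withX]⟩

lemma intertwines_ofR_of_f_eq_row {p : c.Fraction ι γ} {i : ι}
    (hf : p.f = p.A i) (hi : γ = p.α i) (hx : p.x i ∈ c.𝒜 γ) :
    p.Intertwines (ofR (p.x i) hx) := by
  classical
  have hU : Pi.single i 1 ∈ c.vectors fun j => γ * (p.α j)⁻¹ :=
    single_mem_vectors (by simpa [hi] using c.one_mem)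
  refine ⟨replicateRow Unit (Pi.single i 1), replicateRow Unit p.f, .replicateRow hU,
    .replicateRow p.f_mem, ?_, ?_, ?_⟩
  · ext _ j
    simp [ofR, hf, mul_apply, Pi.single_apply]
  · ext
    simp [ofR, mulVec]
  · ext j
    simp [ofR, vecMul, dotProduct]

/-- Since `A⁻¹ x` is the `j`-th unit vector, `f A⁻¹ x = f j`. -/
lemma intertwines_of_x_eq_col {p : c.Fraction ι γ} {j : ι}
    (hx : ∀ i, p.x i = p.A i j) (hj : p.β j = 1) (hf : (fun _ => p.f j) ∈
      c.vectors fun k => γ * ((ofR (1 : R) c.one_mem).β k)⁻¹) :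
    ((ofR (1 : R) c.one_mem).withF (fun _ => p.f j) hf).Intertwines p := by
  classical
  have hV : Pi.single j 1 ∈ c.vectors p.β := single_mem_vectors (by simpa [hj] using c.one_mem)
  refine ⟨replicateCol Unit p.x, replicateCol Unit (Pi.single j 1), .replicateCol p.x_mem,
    .replicateCol hV, ?_, ?_, ?_⟩
  · ext i
    simp [ofR, withF, mul_apply, Pi.single_apply, hx]
  · ext i
    simp [ofR, withF, mulVec, dotProduct]
  · ext
    simp [ofR, withF, vecMul]

lemma ofR_one_withF_intertwines {r : R} (hr : r ∈ c.𝒜 γ) (hf : (fun _ => r) ∈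
      c.vectors fun k => γ * ((ofR (1 : R) c.one_mem).β k)⁻¹) :
    ((ofR (1 : R) c.one_mem).withF (fun _ => r) hf).Intertwines (ofR r hr) := by
  have hU : c.Homog (of fun _ _ => r : Matrix Unit Unit R) (fun _ => γ) fun _ => 1 :=
    fun _ _ => by simpa using hr
  refine ⟨of fun _ _ => r, of fun _ _ => r, hU, hU, ?_, ?_, ?_⟩ <;> ext <;>
    simp [ofR, withF, mulVec, vecMul, dotProduct]

/-- Row and column operations turn `[[A, x], [f, d]] ⊕ 1` into the bordered matrix of the
difference. -/
lemma rel_ofR_of_isSingular {p : c.Fraction ι γ} {d : R} (hd : d ∈ c.𝒜 γ)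
    (h : c.IsSingular (fromBlocks p.A (replicateCol Unit p.x) (replicateRow Unit p.f)
      (of fun _ _ => d))) : p.Rel (ofR d hd) := by
  classical
  let S : Matrix (ι ⊕ Unit) (ι ⊕ Unit) R :=
    fromBlocks p.A (replicateCol Unit p.x) (replicateRow Unit p.f) (of fun _ _ => d)
  let swap : (ι ⊕ Unit) ⊕ Unit ≃ (ι ⊕ Unit) ⊕ Unit := (Equiv.sumAssoc ι Unit Unit).trans
    (((Equiv.refl ι).sumCongr (Equiv.sumComm Unit Unit)).trans (Equiv.sumAssoc ι Unit Unit).symm)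
  let N := (fromBlocks S 0 0 (1 : Matrix Unit Unit R)).submatrix swap swap
  let L : Matrix ((ι ⊕ Unit) ⊕ Unit) ((ι ⊕ Unit) ⊕ Unit) R :=
    fromBlocks 1 0 (replicateRow Unit (Sum.elim 0 (-1))) 1
  let Q : Matrix ((ι ⊕ Unit) ⊕ Unit) ((ι ⊕ Unit) ⊕ Unit) R :=
    fromBlocks 1 (replicateCol Unit (Sum.elim 0 fun _ => d)) 0 1
  have factorization : (p.sub (ofR d hd)).bordered = L * N * Q := by
    ext ((i | i) | i) ((j | j) | j) <;>
      simp [L, N, Q, S, swap, bordered, add, neg, withF, ofR, mul_apply, one_apply]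
  have hS : c.Homog S (Sum.elim p.α fun _ => γ) (Sum.elim p.β fun _ => 1) :=
    p.homog.fromBlocks (.replicateCol p.x_mem) (.replicateRow p.f_mem) fun _ _ => by simpa using hd
  have hOne : c.Homog (1 : Matrix Unit Unit R) (fun _ => γ) fun _ => γ := .one
  have hN : c.Homog N (Sum.elim (Sum.elim p.α fun _ => γ) fun _ => γ)
      (Sum.elim (Sum.elim p.β fun _ => γ) fun _ => 1) :=
    ((hS.fromBlocks .zero .zero hOne).submatrix swap swap).congr (by
      rintro ((i | i) | i) ((j | j) | j) <;> rfl)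
  have hL : c.Homog L (Sum.elim (Sum.elim p.α fun _ => γ) fun _ => γ)
      (Sum.elim (Sum.elim p.α fun _ => γ) fun _ => γ) :=
    Homog.one.fromBlocks .zero (.replicateRow (elim_mem_vectors (zero_mem _)
      (mem_vectors.2 fun _ => by simpa using neg_mem c.one_mem))) .one
  have hQ : c.Homog Q (Sum.elim (Sum.elim p.β fun _ => γ) fun _ => 1)
      (Sum.elim (Sum.elim p.β fun _ => γ) fun _ => 1) :=
    Homog.one.fromBlocks (.replicateCol (elim_mem_vectors (zero_mem _)
      (mem_vectors.2 fun _ => hd))) .zero .one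
  have singular_N : c.IsSingular N :=
    (isSingular_submatrix swap swap _).2 ((isSingular_fromBlocks_diagonal hS hOne).2 (.inl h))
  rw [Rel, Vanishes, factorization, isSingular_mul (hL.mul hN) hQ, isSingular_mul hL hN]
  exact .inl (.inr singular_N)

end Expansion

end Fraction

/-! ### The graded ring of values -/

noncomputable section Value

variable {γ δ : Γ}

/-- Equality of values as a setoid. Numbering the index types keeps the quotient in the universe
of `Γ` and `R`. -/
def fractionSetoid (c : GrPrimeDatum Γ R) (γ : Γ) : Setoid (Σ n : ℕ, c.Fraction (Fin n) γ) where
  r p q := p.2.Rel q.2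
  iseqv := ⟨fun p => .refl p.2, fun h => h.symm, fun h h' => h.trans h'⟩

/-- The homogeneous component of degree `γ` of the graded division ring. -/
def Component (c : GrPrimeDatum Γ R) (γ : Γ) : Type (max u v) := Quotient (c.fractionSetoid γ)

namespace Component

/-- The class of a fraction with arbitrary index type. -/
def mk [Fintype ι] (p : c.Fraction ι γ) : c.Component γ :=
  Quotient.mk (c.fractionSetoid γ) ⟨Fintype.card ι, p.reindex (Fintype.equivFin ι).symm⟩

section

variable [Fintype ι] [Fintype κ]

lemma mk_eq_mk_iff {p : c.Fraction ι γ} {q : c.Fraction κ γ} : mk p = mk q ↔ p.Rel q := by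
  have hp := p.reindex_rel (Fintype.equivFin ι).symm
  have hq := q.reindex_rel (Fintype.equivFin κ).symm
  exact Quotient.eq.trans ⟨fun h => hp.symm.trans (h.trans hq), fun h => hp.trans (h.trans hq.symm)⟩

lemma exists_mk (a : c.Component γ) : ∃ (n : ℕ) (p : c.Fraction (Fin n) γ), mk p = a := by
  induction a using Quotient.inductionOn with
  | h p => exact ⟨p.1, p.2, Quotient.sound (p.2.reindex_rel _)⟩

instance : Zero (c.Component γ) := ⟨mk (.zero γ)⟩

instance : Neg (c.Component γ) :=
  ⟨Quotient.lift (fun p => mk p.2.neg) fun _ _ h => mk_eq_mk_iff.2 h.neg⟩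

instance : Add (c.Component γ) :=
  ⟨Quotient.lift₂ (fun p q => mk (p.2.add q.2)) fun _ _ _ _ hp hq => mk_eq_mk_iff.2 (hp.add hq)⟩

/-- Multiplication of homogeneous components. -/
def mul : c.Component γ → c.Component δ → c.Component (γ * δ) :=
  Quotient.lift₂ (fun p q => mk (p.2.mul q.2)) fun _ q p' _ hp hq =>
    mk_eq_mk_iff.2 ((hp.mul_right q.2).trans (.mul_left p'.2 hq))

lemma mk_eq_zero_iff {p : c.Fraction ι γ} : mk p = 0 ↔ p.Vanishes :=
  mk_eq_mk_iff.trans Fraction.rel_zero_iff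

lemma neg_mk (p : c.Fraction ι γ) : -mk p = mk p.neg :=
  mk_eq_mk_iff.2 (p.reindex_rel _).neg

lemma mk_add_mk (p : c.Fraction ι γ) (q : c.Fraction κ γ) : mk p + mk q = mk (p.add q) :=
  mk_eq_mk_iff.2 ((p.reindex_rel _).add (q.reindex_rel _))

lemma mk_mul_mk (p : c.Fraction ι γ) (q : c.Fraction κ δ) : (mk p).mul (mk q) = mk (p.mul q) :=
  mk_eq_mk_iff.2 (((p.reindex_rel _).mul_right _).trans (.mul_left p (q.reindex_rel _)))

end

instance : AddCommGroup (c.Component γ) where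
  __ := AddGroup.ofLeftAxioms
    (fun a b d => by
      obtain ⟨_, p, rfl⟩ := exists_mk a
      obtain ⟨_, q, rfl⟩ := exists_mk b
      obtain ⟨_, r, rfl⟩ := exists_mk d
      simp only [mk_add_mk]
      exact mk_eq_mk_iff.2 (Fraction.add_assoc_intertwines p q r).rel)
    (fun a => by
      obtain ⟨_, p, rfl⟩ := exists_mk a
      refine (mk_add_mk _ p).trans (mk_eq_mk_iff.2 ?_)
      exact (Fraction.add_comm_intertwines _ _).rel.trans (Fraction.add_intertwines_left rfl).rel)
    (fun a => by
      obtain ⟨_, p, rfl⟩ := exists_mk a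
      rw [neg_mk, mk_add_mk, mk_eq_zero_iff]
      exact p.neg_add_vanishes)
  add_comm a b := by
    obtain ⟨_, p, rfl⟩ := exists_mk a
    obtain ⟨_, q, rfl⟩ := exists_mk b
    rw [mk_add_mk, mk_add_mk]
    exact mk_eq_mk_iff.2 (Fraction.add_comm_intertwines p q).rel

lemma mul_add (a : c.Component γ) (b b' : c.Component δ) :
    a.mul (b + b') = a.mul b + a.mul b' := by
  obtain ⟨_, p, rfl⟩ := exists_mk a
  obtain ⟨_, q, rfl⟩ := exists_mk b
  obtain ⟨_, q', rfl⟩ := exists_mk b'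
  simp only [mk_add_mk, mk_mul_mk]
  exact (mk_eq_mk_iff.2 (Fraction.mul_add_intertwines p q q').rel).symm

lemma add_mul (a a' : c.Component γ) (b : c.Component δ) :
    (a + a').mul b = a.mul b + a'.mul b := by
  obtain ⟨_, p, rfl⟩ := exists_mk a
  obtain ⟨_, p', rfl⟩ := exists_mk a'
  obtain ⟨_, q, rfl⟩ := exists_mk b
  simp only [mk_add_mk, mk_mul_mk]
  exact mk_eq_mk_iff.2 (Fraction.add_mul_intertwines p p' q).rel

/-- The components as a family over the additive copy of `Γ`, on which `DirectSum` defines its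
multiplication. -/
abbrev additive (c : GrPrimeDatum Γ R) (a : Additive Γ) : Type (max u v) := c.Component a.toMul

lemma gradedMonoid_mk_eq [Fintype ι] [Fintype κ] {γ γ' : Γ} {p : c.Fraction ι γ}
    {q : c.Fraction κ γ'} (e : γ = γ') (h : (p.castDegree e).Rel q) :
    (⟨.ofMul γ, mk p⟩ : GradedMonoid (additive c)) = ⟨.ofMul γ', mk q⟩ := by
  subst e
  exact congrArg _ (mk_eq_mk_iff.2 h)

instance : GradedMonoid.GMul (additive c) := ⟨mul⟩

instance : GradedMonoid.GOne (additive c) := ⟨mk (.ofR 1 c.one_mem)⟩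

instance : GradedMonoid.GMonoid (additive c) where
  one_mul := by
    rintro ⟨_, a⟩
    obtain ⟨_, p, rfl⟩ := exists_mk a
    refine (congrArg (Sigma.mk _) (mk_mul_mk _ p)).trans
      (gradedMonoid_mk_eq (one_mul _).symm (Fraction.Intertwines.rel ?_)).symm
    simpa only [one_smul, Fraction.castDegree] using Fraction.ofR_mul_intertwines c.one_mem p
  mul_one := by
    rintro ⟨_, a⟩
    obtain ⟨_, p, rfl⟩ := exists_mk a
    refine (congrArg (Sigma.mk _) (mk_mul_mk p _)).trans
      (gradedMonoid_mk_eq (mul_one _).symm (.symm ?_)).symm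
    exact (Fraction.mul_ofR_intertwines c.one_mem rfl rfl (fun _ => (mul_one _).symm)
      (fun _ => (mul_one _).symm) fun _ => (mul_one _).symm).rel
  mul_assoc := by
    rintro ⟨_, a⟩ ⟨_, b⟩ ⟨_, d⟩
    obtain ⟨_, p, rfl⟩ := exists_mk a
    obtain ⟨_, q, rfl⟩ := exists_mk b
    obtain ⟨_, r, rfl⟩ := exists_mk d
    refine Eq.trans (congrArg (Sigma.mk _) ?_) ((gradedMonoid_mk_eq (mul_assoc _ _ _)
      (Fraction.mul_assoc_intertwines p q r).rel).trans (congrArg (Sigma.mk _) ?_))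
    · exact (congrArg (mul · (mk r)) (mk_mul_mk p q)).trans (mk_mul_mk _ _)
    · exact ((congrArg (mul (mk p)) (mk_mul_mk q r)).trans (mk_mul_mk _ _)).symm

instance : DirectSum.GRing (additive c) where
  mul_zero a := (by simpa using mul_add a 0 0 : mul a 0 = 0)
  zero_mul a := (by simpa using add_mul 0 0 a : mul 0 a = 0)
  mul_add := mul_add
  add_mul := add_mul
  natCast n := n • (GradedMonoid.GOne.one : additive c 0)
  natCast_zero := by simp
  natCast_succ n := by simp [add_smul]
  intCast n := n • (GradedMonoid.GOne.one : additive c 0)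
  intCast_ofNat n := by simp
  intCast_negSucc_ofNat n := by
    rw [Int.negSucc_eq, neg_smul]
    congr 1

end Component

section ResidueRing

variable [Fintype ι] [Fintype κ] {γ δ : Γ}

/-- The graded division ring attached to a gr-prime matrix ideal. -/
abbrev ResidueRing (c : GrPrimeDatum Γ R) : Type (max u v) :=
  DirectSum (Additive Γ) (Component.additive c)

/-- The element `f A⁻¹ x` of the residue ring. -/
def Fraction.value (p : c.Fraction ι γ) : c.ResidueRing :=
  DirectSum.of (Component.additive c) (.ofMul γ) (.mk p)

/-- The grading of the residue ring. -/
def grading (c : GrPrimeDatum Γ R) (γ : Γ) : AddSubgroup c.ResidueRing :=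
  (DirectSum.of (Component.additive c) (.ofMul γ)).range

namespace Fraction

variable {p : c.Fraction ι γ} {q : c.Fraction κ γ}

lemma Rel.value_eq (h : p.Rel q) : p.value = q.value :=
  congrArg _ (Component.mk_eq_mk_iff.2 h)

lemma Intertwines.value_eq (h : p.Intertwines q) : p.value = q.value := h.rel.value_eq

lemma value_castDegree (p : c.Fraction ι γ) (h : γ = δ) : (p.castDegree h).value = p.value := by
  subst h
  rfl

lemma value_add (p : c.Fraction ι γ) (q : c.Fraction κ γ) :
    (p.add q).value = p.value + q.value := by
  rw [value, value, value, ← map_add, Component.mk_add_mk]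

lemma value_mul (p : c.Fraction ι γ) (q : c.Fraction κ δ) :
    (p.mul q).value = p.value * q.value := by
  rw [value, value, value, DirectSum.of_mul_of, ← Component.mk_mul_mk]
  rfl

lemma value_eq_zero_iff : p.value = 0 ↔ p.Vanishes := by
  rw [← Component.mk_eq_zero_iff, ← map_zero (DirectSum.of (Component.additive c) (.ofMul γ))]
  exact (DirectSum.of_injective (β := Component.additive c) (.ofMul γ)).eq_iff

lemma value_mem_grading (p : c.Fraction ι γ) : p.value ∈ c.grading γ := ⟨.mk p, rfl⟩

end Fraction

lemma exists_value_eq {a : c.ResidueRing} (ha : a ∈ c.grading γ) :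
    ∃ (n : ℕ) (p : c.Fraction (Fin n) γ), p.value = a := by
  obtain ⟨k, rfl⟩ := ha
  obtain ⟨n, p, rfl⟩ := k.exists_mk
  exact ⟨n, p, rfl⟩

lemma one_mem_grading : (1 : c.ResidueRing) ∈ c.grading 1 :=
  (Fraction.ofR 1 c.one_mem).value_mem_grading

lemma mul_mem_grading {a b : c.ResidueRing} (ha : a ∈ c.grading γ) (hb : b ∈ c.grading δ) :
    a * b ∈ c.grading (γ * δ) := by
  obtain ⟨_, p, rfl⟩ := exists_value_eq ha
  obtain ⟨_, q, rfl⟩ := exists_value_eq hb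
  exact p.value_mul q ▸ (p.mul q).value_mem_grading

lemma isInternal_grading : DirectSum.IsInternal c.grading :=
  isInternal_range_of (Component.additive c)

lemma residueRing_induction {motive : c.ResidueRing → Prop} (a : c.ResidueRing)
    (zero : motive 0) (value : ∀ (γ : Γ) (n : ℕ) (p : c.Fraction (Fin n) γ), motive p.value)
    (add : ∀ a b, motive a → motive b → motive (a + b)) : motive a := by
  refine DirectSum.induction_on a zero (fun γ k => ?_) add
  obtain ⟨n, p, rfl⟩ := k.exists_mk
  exact value γ.toMul n p

instance : SetLike.GradedMonoid fun a : Additive Γ => c.𝒜 a.toMul where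
  one_mem := c.one_mem
  mul_mem _ _ _ _ := c.mul_mem

/-- `R` as the direct sum of its components, over the additive copy of `Γ`. -/
def directSumEquiv (c : GrPrimeDatum Γ R) :
    DirectSum (Additive Γ) (fun a => c.𝒜 a.toMul) ≃+* R :=
  .ofBijective (DirectSum.coeRingHom fun a : Additive Γ => c.𝒜 a.toMul)
    (show Function.Bijective (DirectSum.coeAddMonoidHom c.𝒜) from c.internal)

/-- `r ↦ 1 · 1⁻¹ · r` on a homogeneous component. -/
def componentHom (c : GrPrimeDatum Γ R) (a : Additive Γ) : c.𝒜 a.toMul →+ c.ResidueRing :=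
  AddMonoidHom.mk' (fun r => (Fraction.ofR r.1 r.2).value) fun r s => by
    have additive := (Fraction.ofR (c := c) (γ := a.toMul) 0 (zero_mem _)).withX_add_intertwines
      (mem_vectors.2 fun _ => r.2) (mem_vectors.2 fun _ => s.2)
    rw [← Fraction.value_add]
    exact additive.value_eq.symm

/-- The homomorphism `φ` on the direct sum of the homogeneous components of `R`. -/
def directSumHom (c : GrPrimeDatum Γ R) :
    DirectSum (Additive Γ) (fun a => c.𝒜 a.toMul) →+* c.ResidueRing :=
  DirectSum.toSemiring c.componentHom rfl fun r s => by
    have multiplicative := Fraction.mul_ofR_intertwines (p := Fraction.ofR r.1 r.2) s.2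
      (q := Fraction.ofR _ (c.mul_mem r.2 s.2)) rfl rfl (fun _ => rfl) (fun _ => rfl) fun _ => rfl
    exact multiplicative.value_eq.symm.trans (Fraction.value_mul _ _)

/-- The homomorphism `φ : R → K`. -/
def toResidueRing (c : GrPrimeDatum Γ R) : R →+* c.ResidueRing :=
  c.directSumHom.comp c.directSumEquiv.symm.toRingHom

lemma toResidueRing_apply {r : R} (hr : r ∈ c.𝒜 γ) :
    c.toResidueRing r = (Fraction.ofR r hr).value := by
  have component : c.directSumEquiv.symm r =
      DirectSum.of (fun a : Additive Γ => c.𝒜 a.toMul) (.ofMul γ) ⟨r, hr⟩ := by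
    rw [RingEquiv.symm_apply_eq]
    exact (DirectSum.coeRingHom_of (fun a : Additive Γ => c.𝒜 a.toMul) _ ⟨r, hr⟩).symm
  exact (congrArg c.directSumHom component).trans (DirectSum.toSemiring_of _ _ _ _ _)

end ResidueRing

/-! ### Inverting the image of a nonsingular matrix -/

section Inverse

variable [Fintype ι] [Fintype κ] {γ δ : Γ}

namespace NonsingularMatrix

/-- The fraction `f A⁻¹ x` for a row of degree `γ` and a column of degree `δ`. -/
def frac (M : c.NonsingularMatrix ι) {f x : ι → R} (hf : f ∈ c.vectors fun j => γ * (M.β j)⁻¹)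
    (hx : x ∈ c.vectors fun i => M.α i * δ⁻¹) : c.Fraction ι (γ * δ⁻¹) where
  A := M.A
  α := fun i => M.α i * δ⁻¹
  β := fun j => M.β j * δ⁻¹
  homog := M.homog.shift δ⁻¹
  nonsing := M.nonsing
  f := f
  x := x
  f_mem := mem_vectors.2 fun j => mem_of_mem_of_eq (mem_vectors.1 hf j) (by group)
  x_mem := hx

section Expansion

variable [DecidableEq ι]

lemma value_frac_single_left (M : c.NonsingularMatrix ι) {x : ι → R} {j : ι} {r : R}
    (hr : r ∈ c.𝒜 (γ * (M.β j)⁻¹)) (hx : x ∈ c.vectors fun i => M.α i * δ⁻¹) :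
    (M.frac (single_mem_vectors hr) hx).value =
      c.toResidueRing r * (M.frac (single_one_mem_row M.β j) hx).value := by
  rw [toResidueRing_apply hr, ← Fraction.value_mul,
    ← (Fraction.ofR_mul_intertwines hr _).value_eq, ← Fraction.value_castDegree _
    (by group : γ * δ⁻¹ = γ * (M.β j)⁻¹ * (M.β j * δ⁻¹))]
  congr 1
  simp [Fraction.castDegree, Fraction.withF, frac, ← Pi.single_smul]

lemma value_frac_single_right (M : c.NonsingularMatrix ι) {f : ι → R} {i : ι} {r : R}
    (hf : f ∈ c.vectors fun j => γ * (M.β j)⁻¹) (hr : r ∈ c.𝒜 (M.α i * δ⁻¹)) :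
    (M.frac hf (single_mem_vectors hr)).value =
      (M.frac hf (single_one_mem_col M.α i)).value * c.toResidueRing r := by
  rw [toResidueRing_apply hr, ← Fraction.value_mul, ← Fraction.value_castDegree _
    (by group : γ * δ⁻¹ = γ * (M.α i)⁻¹ * (M.α i * δ⁻¹))]
  refine (Fraction.mul_ofR_intertwines hr rfl rfl (fun k => ?_) (fun k => ?_)
    fun k => ?_).value_eq.symm
  · simp [Fraction.castDegree, Fraction.withF, frac, Pi.single_apply]
  · simp [Fraction.castDegree, Fraction.withF, frac]
  · simp [Fraction.castDegree, Fraction.withF, frac]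

lemma value_frac_eq_sum_left (M : c.NonsingularMatrix ι) {f x : ι → R}
    (hf : f ∈ c.vectors fun j => γ * (M.β j)⁻¹) (hx : x ∈ c.vectors fun i => M.α i * δ⁻¹) :
    (M.frac hf hx).value =
      ∑ j, c.toResidueRing (f j) * (M.frac (single_one_mem_row M.β j) hx).value := by
  let value : c.vectors (fun j => γ * (M.β j)⁻¹) →+ c.ResidueRing :=
    AddMonoidHom.mk' (fun f => (M.frac f.2 hx).value) fun f₁ f₂ => by
      rw [← Fraction.value_add]
      exact ((M.frac f₁.2 hx).withF_add_intertwines _ _).value_eq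
  have expand : (⟨f, hf⟩ : c.vectors fun j => γ * (M.β j)⁻¹) =
      ∑ j, ⟨Pi.single j (f j), single_mem_vectors (mem_vectors.1 hf j)⟩ :=
    Subtype.ext (by simp [Finset.univ_sum_single])
  refine (congrArg value expand).trans ((map_sum value _ _).trans ?_)
  exact Finset.sum_congr rfl fun j _ => M.value_frac_single_left (mem_vectors.1 hf j) hx

lemma value_frac_eq_sum_right (M : c.NonsingularMatrix ι) {f x : ι → R}
    (hf : f ∈ c.vectors fun j => γ * (M.β j)⁻¹) (hx : x ∈ c.vectors fun i => M.α i * δ⁻¹) :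
    (M.frac hf hx).value =
      ∑ i, (M.frac hf (single_one_mem_col M.α i)).value * c.toResidueRing (x i) := by
  let value : c.vectors (fun i => M.α i * δ⁻¹) →+ c.ResidueRing :=
    AddMonoidHom.mk' (fun x => (M.frac hf x.2).value) fun x₁ x₂ => by
      rw [← Fraction.value_add]
      exact ((M.frac hf x₁.2).withX_add_intertwines _ _).value_eq.symm
  have expand : (⟨x, hx⟩ : c.vectors fun i => M.α i * δ⁻¹) =
      ∑ i, ⟨Pi.single i (x i), single_mem_vectors (mem_vectors.1 hx i)⟩ :=
    Subtype.ext (by simp [Finset.univ_sum_single])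
  refine (congrArg value expand).trans ((map_sum value _ _).trans ?_)
  exact Finset.sum_congr rfl fun i _ => M.value_frac_single_right hf (mem_vectors.1 hx i)

/-- The inverse of the image of a nonsingular matrix, with `(j, i)` entry `e_j A⁻¹ e_i`. -/
def inverse (M : c.NonsingularMatrix ι) : Matrix ι ι c.ResidueRing := of fun j i =>
  (M.frac (single_one_mem_row M.β j) (single_one_mem_col M.α i)).value

lemma map_mul_inverse (M : c.NonsingularMatrix ι) : M.A.map c.toResidueRing * M.inverse = 1 := by
  refine Matrix.ext fun k i => ?_
  have hrow : M.A k ∈ c.vectors fun j => M.α k * (M.β j)⁻¹ := mem_vectors.2 (M.homog k)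
  have hi := single_one_mem_col (c := c) M.α i
  have value_row : (M.frac hrow hi).value = c.toResidueRing ((Pi.single i 1 : ι → R) k) := by
    rw [toResidueRing_apply (mem_vectors.1 hi k)]
    exact (Fraction.intertwines_ofR_of_f_eq_row (p := M.frac hrow hi) (i := k) rfl rfl
      (mem_vectors.1 hi k)).value_eq
  calc (M.A.map c.toResidueRing * M.inverse) k i
    _ = (M.frac hrow hi).value := (M.value_frac_eq_sum_left hrow hi).symm
    _ = c.toResidueRing ((Pi.single i 1 : ι → R) k) := value_row
    _ = (1 : Matrix ι ι c.ResidueRing) k i := by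
      obtain rfl | h := eq_or_ne k i <;> simp [*]

lemma inverse_mul_map (M : c.NonsingularMatrix ι) : M.inverse * M.A.map c.toResidueRing = 1 := by
  refine Matrix.ext fun l j => ?_
  have hcol : M.Aᵀ j ∈ c.vectors fun i => M.α i * (M.β j)⁻¹ :=
    mem_vectors.2 fun i => M.homog i j
  have hl := single_one_mem_row (c := c) M.β l
  have value_col : (M.frac hl hcol).value = c.toResidueRing ((Pi.single l 1 : ι → R) j) := by
    have hj : (fun _ => (Pi.single l 1 : ι → R) j) ∈ c.vectors fun k => M.β l * (M.β j)⁻¹ *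
        ((Fraction.ofR (1 : R) c.one_mem).β k)⁻¹ :=
      mem_vectors.2 fun _ => mem_of_mem_of_eq (mem_vectors.1 hl j) (by simp [Fraction.ofR])
    rw [toResidueRing_apply (mem_vectors.1 hl j),
      ← (Fraction.ofR_one_withF_intertwines (mem_vectors.1 hl j) hj).value_eq]
    exact (Fraction.intertwines_of_x_eq_col (p := M.frac hl hcol) (j := j) (fun _ => rfl)
      (mul_inv_cancel _) hj).value_eq.symm
  calc (M.inverse * M.A.map c.toResidueRing) l j
    _ = (M.frac hl hcol).value := (M.value_frac_eq_sum_right hl hcol).symm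
    _ = c.toResidueRing ((Pi.single l 1 : ι → R) j) := value_col
    _ = (1 : Matrix ι ι c.ResidueRing) l j := by
      obtain rfl | h := eq_or_ne l j <;> simp [Ne.symm, *]

lemma isUnit_map (M : c.NonsingularMatrix ι) : IsUnit (M.A.map c.toResidueRing) :=
  ⟨⟨_, _, M.map_mul_inverse, M.inverse_mul_map⟩, rfl⟩

lemma value_frac (M : c.NonsingularMatrix ι) {f x : ι → R}
    (hf : f ∈ c.vectors fun j => γ * (M.β j)⁻¹) (hx : x ∈ c.vectors fun i => M.α i * δ⁻¹) :
    (M.frac hf hx).value =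
      (c.toResidueRing ∘ f) ⬝ᵥ (M.inverse *ᵥ (c.toResidueRing ∘ x)) := by
  rw [M.value_frac_eq_sum_left]
  exact Finset.sum_congr rfl fun j _ => congrArg _ (M.value_frac_eq_sum_right _ hx)

end Expansion

end NonsingularMatrix

lemma Fraction.value_eq_dotProduct [DecidableEq ι] (p : c.Fraction ι γ) :
    p.value = (c.toResidueRing ∘ p.f) ⬝ᵥ (p.inverse *ᵥ (c.toResidueRing ∘ p.x)) := by
  have hx : p.x ∈ c.vectors fun i => p.α i * 1⁻¹ := by simpa using p.x_mem
  rw [← p.value_frac p.f_mem hx, ← p.value_castDegree (by simp : γ = γ * 1⁻¹)]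
  refine (Fraction.Intertwines.of_equiv (.refl ι) ?_ ?_ ?_ ?_ ?_).value_eq <;>
    simp [castDegree, withF, NonsingularMatrix.frac]

instance : Nontrivial c.ResidueRing := by
  refine ⟨1, 0, fun h => ?_⟩
  have vanishes : (Fraction.ofR 1 c.one_mem).Vanishes := Fraction.value_eq_zero_iff.1 h
  have unipotent : (Fraction.ofR 1 c.one_mem).bordered.submatrix (Equiv.refl _)
      (Equiv.sumComm Unit Unit) = fromBlocks 1 (1 : Matrix Unit Unit R) 0 1 := by
    ext (i | i) (j | j) <;> simp [Fraction.bordered, Fraction.ofR]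
  rw [Fraction.Vanishes, ← isSingular_submatrix (.refl _) (Equiv.sumComm Unit Unit),
    unipotent] at vanishes
  exact Fraction.not_isSingular_fromBlocks_one_upper (α := fun _ => 1) .one vanishes

lemma Fraction.isUnit_value {p : c.Fraction ι γ} (hp : p.value ≠ 0) :
    IsUnit p.value := by
  classical
  let φ := c.toResidueRing
  let bordered : c.NonsingularMatrix (ι ⊕ Unit) :=
    { A := p.bordered
      α := _
      β := _
      homog := p.homog_bordered
      nonsing := fun h => hp (value_eq_zero_iff.2 h) }
  have map_bordered : bordered.A.map φ = fromBlocks (p.A.map φ) (replicateCol Unit (φ ∘ p.x))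
      (replicateRow Unit (φ ∘ p.f)) 0 := by
    ext (i | i) (j | j) <;> simp [bordered, Fraction.bordered]
  have schurComplement := isUnit_schurComplement p.map_mul_inverse p.inverse_mul_map
    (map_bordered ▸ bordered.isUnit_map)
  rw [zero_sub, IsUnit.neg_iff, ← MulEquiv.isUnit_map (uniqueRingEquiv (m := Unit))]
    at schurComplement
  convert schurComplement
  rw [value_eq_dotProduct, dotProduct_mulVec]
  rfl

lemma isUnit_of_mem_grading {a : c.ResidueRing} (ha : a ∈ c.grading γ) (h : a ≠ 0) :
    IsUnit a := by
  obtain ⟨_, p, rfl⟩ := exists_value_eq ha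
  exact p.isUnit_value h

end Inverse

/-! ### Growing nonsingular minors -/

section Minors

variable [Fintype ι] [Fintype κ] {γ δ : Γ}
  {T : Subring c.ResidueRing} {A : Matrix ι ι R} {β : ι → Γ}

lemma toResidueRing_mem_grading {r : R} (hr : r ∈ c.𝒜 γ) : c.toResidueRing r ∈ c.grading γ := by
  rw [toResidueRing_apply hr]
  exact Fraction.value_mem_grading _

/-- Subrings of the residue ring that contain the image of `R` and are closed under inverses of
nonzero homogeneous elements. -/
structure IsDivisionClosed (T : Subring c.ResidueRing) : Prop where
  range_subset : Set.range c.toResidueRing ⊆ T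
  inv_mem : ∀ (γ : Γ) (a b : c.ResidueRing), a ∈ c.grading γ → a ∈ T → a ≠ 0 → a * b = 1 →
    b * a = 1 → b ∈ T

lemma IsDivisionClosed.map_mem (hT : IsDivisionClosed T) (r : R) : c.toResidueRing r ∈ T :=
  hT.range_subset ⟨r, rfl⟩

lemma isDivisionClosed_top : IsDivisionClosed (⊤ : Subring c.ResidueRing) :=
  ⟨Set.subset_univ _, fun _ _ _ _ _ _ _ _ => trivial⟩

namespace NonsingularMatrix

/-- The Schur complement `d - f A⁻¹ x` of `A` in the bordered matrix `[[A, x], [f, d]]`. -/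
def schurComplement [DecidableEq κ] (M : c.NonsingularMatrix κ) (f x : κ → R) (d : R) :
    c.ResidueRing :=
  c.toResidueRing d - (c.toResidueRing ∘ f) ⬝ᵥ (M.inverse *ᵥ (c.toResidueRing ∘ x))

variable [DecidableEq κ] {M : c.NonsingularMatrix κ} {f x : κ → R} {d : R}

lemma schurComplement_mem_grading (hf : f ∈ c.vectors fun j => γ * (M.β j)⁻¹)
    (hx : x ∈ c.vectors fun i => M.α i * δ⁻¹) (hd : d ∈ c.𝒜 (γ * δ⁻¹)) :
    M.schurComplement f x d ∈ c.grading (γ * δ⁻¹) := by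
  rw [schurComplement, ← M.value_frac hf hx]
  exact sub_mem (toResidueRing_mem_grading hd) (Fraction.value_mem_grading _)

lemma schurComplement_eq_zero (hf : f ∈ c.vectors fun j => γ * (M.β j)⁻¹)
    (hx : x ∈ c.vectors fun i => M.α i * δ⁻¹) (hd : d ∈ c.𝒜 (γ * δ⁻¹))
    (h : c.IsSingular (fromBlocks M.A (replicateCol Unit x) (replicateRow Unit f)
      (of fun _ _ => d))) : M.schurComplement f x d = 0 := by
  rw [schurComplement, ← M.value_frac hf hx, toResidueRing_apply hd, sub_eq_zero]
  exact (Fraction.rel_ofR_of_isSingular (p := M.frac hf hx) hd h).value_eq.symm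

lemma reflectsMem_bordered (hT : IsDivisionClosed T)
    (hM : ReflectsMem T (M.A.map c.toResidueRing)) (hf : f ∈ c.vectors fun j => γ * (M.β j)⁻¹)
    (hx : x ∈ c.vectors fun i => M.α i * δ⁻¹) (hd : d ∈ c.𝒜 (γ * δ⁻¹))
    (h : M.schurComplement f x d ≠ 0) :
    ReflectsMem T ((fromBlocks M.A (replicateCol Unit x) (replicateRow Unit f)
      (of fun _ _ => d)).map c.toResidueRing) := by
  have homogeneous := schurComplement_mem_grading hf hx hd
  obtain ⟨u, hu⟩ := isUnit_of_mem_grading homogeneous h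
  have mem : M.schurComplement f x d ∈ T := T.sub_mem (hT.map_mem d) <| sum_mem fun j _ =>
    T.mul_mem (hT.map_mem _) (hM.mulVec_mem M.map_mul_inverse (fun _ => hT.map_mem _) j)
  have inv_mem : ↑u⁻¹ ∈ T :=
    hT.inv_mem _ _ _ homogeneous mem h (hu ▸ u.mul_inv) (hu ▸ u.inv_mul)
  convert hM.fromBlocks M.map_mul_inverse (x := c.toResidueRing ∘ x) (fun _ => hT.map_mem _)
    (y := c.toResidueRing ∘ f) (fun _ => hT.map_mem _) inv_mem (hu ▸ u.inv_mul) using 1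
  ext (i | i) (j | j) <;> rfl

end NonsingularMatrix

/-- A nonsingular minor of `A` whose image reflects membership in `T`. -/
structure ReflectingMinor (T : Subring c.ResidueRing) (A : Matrix ι ι R) (κ : Type*)
    [Fintype κ] where
  rows : κ ↪ ι
  cols : κ ↪ ι
  nonsing : ¬ c.IsSingular (A.submatrix rows cols)
  reflects : ReflectsMem T ((A.submatrix rows cols).map c.toResidueRing)

namespace ReflectingMinor

/-- The minor on no rows and no columns. -/
def empty : ReflectingMinor T A Empty where
  rows := .ofIsEmpty
  cols := .ofIsEmpty
  nonsing := by
    rw [Subsingleton.elim (A.submatrix _ _) 1]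
    exact not_isSingular_one
  reflects _ _ j := j.elim

lemma exists_border (m : ReflectingMinor T A κ) (hT : IsDivisionClosed T) (hA : c.Homog A α β)
    (inj : Function.Injective (A.map c.toResidueRing).mulVec)
    (hcard : Fintype.card κ < Fintype.card ι) : Nonempty (ReflectingMinor T A (κ ⊕ Unit)) := by
  classical
  obtain ⟨j₀, hj₀⟩ : ∃ j₀, j₀ ∉ Set.range m.cols := by
    by_contra! surj
    exact hcard.not_ge (Fintype.card_le_of_surjective m.cols surj)
  let M : c.NonsingularMatrix κ := ⟨_, _, _, hA.submatrix m.rows m.cols, m.nonsing⟩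
  let f (i : ι) : κ → R := fun k => A i (m.cols k)
  let x : κ → R := fun k => A (m.rows k) j₀
  obtain ⟨i₀, hi₀⟩ : ∃ i₀, M.schurComplement (f i₀) x (A i₀ j₀) ≠ 0 := by
    obtain ⟨i₀, h⟩ := exists_ne_submatrix_mulVec inj hj₀ (M.inverse *ᵥ (c.toResidueRing ∘ x))
    exact ⟨i₀, sub_ne_zero.2 h⟩
  have hi₀' : i₀ ∉ Set.range m.rows := by
    rintro ⟨k, rfl⟩
    refine hi₀ (sub_eq_zero.2 ?_)
    have solves : M.A.map c.toResidueRing *ᵥ (M.inverse *ᵥ (c.toResidueRing ∘ x)) =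
        c.toResidueRing ∘ x := by rw [mulVec_mulVec, M.map_mul_inverse, one_mulVec]
    exact (congrFun solves k).symm
  let adjoin (e : κ ↪ ι) (i : ι) (hi : i ∉ Set.range e) : κ ⊕ Unit ↪ ι :=
    ⟨Sum.elim e fun _ => i, e.injective.sumElim (Function.injective_of_subsingleton _)
      fun k _ h => hi ⟨k, h⟩⟩
  have bordered : A.submatrix (adjoin m.rows i₀ hi₀') (adjoin m.cols j₀ hj₀) =
      fromBlocks M.A (replicateCol Unit x) (replicateRow Unit (f i₀)) (of fun _ _ => A i₀ j₀) := by
    ext (i | i) (j | j) <;> rfl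
  have hf : f i₀ ∈ c.vectors fun k => α i₀ * (M.β k)⁻¹ := mem_vectors.2 fun _ => hA _ _
  have hx : x ∈ c.vectors fun k => M.α k * (β j₀)⁻¹ := mem_vectors.2 fun _ => hA _ _
  refine ⟨⟨adjoin m.rows i₀ hi₀', adjoin m.cols j₀ hj₀, ?_, ?_⟩⟩ <;> rw [bordered]
  · exact fun h => hi₀ (M.schurComplement_eq_zero hf hx (hA _ _) h)
  · exact M.reflectsMem_bordered hT m.reflects hf hx (hA _ _) hi₀

lemma nonsing_and_reflectsMem {κ : Type*} [Fintype κ] (m : ReflectingMinor T A κ)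
    (hT : IsDivisionClosed T) (hA : c.Homog A α β)
    (inj : Function.Injective (A.map c.toResidueRing).mulVec) :
    ¬ c.IsSingular A ∧ ReflectsMem T (A.map c.toResidueRing) := by
  obtain hlt | heq := (Fintype.card_le_of_embedding m.rows).lt_or_eq
  · obtain ⟨larger⟩ := m.exists_border hT hA inj hlt
    exact larger.nonsing_and_reflectsMem hT hA inj
  · let rows := Equiv.ofBijective m.rows
      ((Fintype.bijective_iff_injective_and_card _).2 ⟨m.rows.injective, heq⟩)
    let cols := Equiv.ofBijective m.cols
      ((Fintype.bijective_iff_injective_and_card _).2 ⟨m.cols.injective, heq⟩)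
    exact ⟨(isSingular_submatrix rows cols A).not.1 m.nonsing,
      .of_submatrix (e := rows) cols m.reflects⟩
termination_by Fintype.card ι - Fintype.card κ
decreasing_by simp; omega

end ReflectingMinor

lemma isUnit_map_iff [DecidableEq ι] (hA : c.Homog A α β) :
    IsUnit (A.map c.toResidueRing) ↔ ¬ c.IsSingular A :=
  ⟨fun h => (ReflectingMinor.empty.nonsing_and_reflectsMem isDivisionClosed_top hA
    (mulVec_injective_of_isUnit h)).1, fun h => NonsingularMatrix.isUnit_map ⟨A, α, β, hA, h⟩⟩

lemma mem_P_iff {n : ℕ} {A : Matrix (Fin n) (Fin n) R} :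
    (⟨n, A⟩ : SqMat R) ∈ c.P ↔ IsHomogSq c.𝒜 A ∧ ¬ IsUnit (A.map c.toResidueRing) := by
  have mem_iff_isSingular : (⟨n, A⟩ : SqMat R) ∈ c.P ↔ c.IsSingular A :=
    (isSingular_iff (.refl _) (.refl _)).symm
  refine ⟨fun hA => ?_, fun ⟨⟨α, β, homogeneous⟩, not_isUnit⟩ => ?_⟩
  · obtain ⟨α, β, homogeneous⟩ := c.prime.subset_homog _ hA
    exact ⟨⟨α, β, homogeneous⟩, fun isUnit =>
      (isUnit_map_iff (α := α) (β := β) homogeneous).1 isUnit (mem_iff_isSingular.1 hA)⟩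
  · by_contra hA
    exact not_isUnit ((isUnit_map_iff (α := α) (β := β) homogeneous).2
      (mem_iff_isSingular.not.1 hA))

lemma IsDivisionClosed.value_mem (hT : IsDivisionClosed T) (p : c.Fraction ι γ) :
    p.value ∈ T := by
  classical
  have reflects : ReflectsMem T (p.A.map c.toResidueRing) :=
    (ReflectingMinor.empty.nonsing_and_reflectsMem hT p.homog
      (mulVec_injective_of_isUnit p.isUnit_map)).2
  rw [p.value_eq_dotProduct]
  exact sum_mem fun j _ => T.mul_mem (hT.map_mem _)
    (reflects.mulVec_mem p.map_mul_inverse (fun _ => hT.map_mem _) j)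

lemma IsDivisionClosed.eq_top (hT : IsDivisionClosed T) : T = ⊤ :=
  (Subring.eq_top_iff' T).2 fun a => residueRing_induction a T.zero_mem
    (fun _ _ p => hT.value_mem p) fun _ _ => T.add_mem

end Minors

/-- The residue ring together with the canonical map. -/
def toGrDivRingHom (c : GrPrimeDatum Γ R) : GrDivRingHom Γ R c.𝒜 where
  K := c.ResidueRing
  grading := c.grading
  internal := isInternal_grading
  one_mem := one_mem_grading
  mul_mem := mul_mem_grading
  isUnit_of_ne := isUnit_of_mem_grading
  φ := c.toResidueRing
  map_mem := toResidueRing_mem_grading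

end Value

end GrPrimeDatum

/-- Every gr-prime matrix ideal `P` of a `Γ`-graded ring `R` is
the gr-singular kernel of a `Γ`-graded epic `R`-division ring: there exist a
`Γ`-graded division ring `K` and a homomorphism of `Γ`-graded rings `φ : R → K`
such that the only subring of `K` containing `φ(R)` and closed under inverses of
its own nonzero homogeneous elements is `K` itself, and
`P = {A ∈ 𝔐(R) : A^φ is not invertible over K}`. -/
theorem grPrimeMatrixIdeal_is_singular_kernel
    {Γ : Type u} [Group Γ] [DecidableEq Γ] {R : Type v} [Ring R]
    (𝒜 : Γ → AddSubgroup R)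
    (hinternal : DirectSum.IsInternal 𝒜)
    (hone : (1 : R) ∈ 𝒜 1)
    (hmul : ∀ {γ δ : Γ} {x y : R}, x ∈ 𝒜 γ → y ∈ 𝒜 δ → x * y ∈ 𝒜 (γ * δ))
    (P : Set (SqMat R)) (hP : IsGrPrimeMatrixIdeal 𝒜 P) :
    ∃ d : GrDivRingHom Γ R 𝒜,
      (∀ T : Subring d.K,
          Set.range ⇑d.φ ⊆ (T : Set d.K) →
          (∀ (γ : Γ) (x y : d.K), x ∈ d.grading γ → x ∈ T → x ≠ 0 →
            x * y = 1 → y * x = 1 → y ∈ T) →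
          T = ⊤) ∧
      P = {p : SqMat R | IsHomogSq 𝒜 p.2 ∧ ¬ IsUnit ((p.2).map ⇑d.φ)} := by
  let c : GrPrimeDatum Γ R := ⟨𝒜, hinternal, hone, hmul, P, hP⟩
  exact ⟨c.toGrDivRingHom,
    fun T range_subset inv_mem => GrPrimeDatum.IsDivisionClosed.eq_top ⟨range_subset, inv_mem⟩,
    Set.ext fun _ => c.mem_P_iff⟩
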